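/- Assume f satisfies (f1), (f2), and (f4'): (F/f)'(s) ≥ (n−2)/2 for all s > β, and let α* ∈ G_k. Fix i ∈ {1,…,k−1}. Then there exists δ ∈ (0, δ₁) (δ₁ as in the δ₁-lemma) such that for all α₁ < α₂ in (α*−δ, α*+δ) the following holds. Let M_j and m_j be the i-th consecutive local maximum and minimum values of u_j := u(·,α_j) in [0, T_{k−1}(α*)+a], and let Q_j(s) := Q(s,α_j) along the decreasing branch of u_j joining these extrema. If M₁ < M₂ and Q₁(M₁) > Q₂(M₂), then m₁ > m₂ and Q₁(m₁) > Q₂(m₂). -/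

import Mathlib

open Set Filter MeasureTheory

namespace Paper

noncomputable section

/-- `F s = ∫₀ˢ f t dt`. -/
def Fint (f : ℝ → ℝ) (s : ℝ) : ℝ := ∫ t in (0:ℝ)..s, f t

/-- Hypothesis (f1): `f` is odd, `f 0 = 0`, there are `β > b > 0` with `f > 0` on `(b,∞)`,
`f ≤ 0`, `f ≢ 0` on `[0,b]`, and `F β = 0`. -/
def Hf1 (f : ℝ → ℝ) (b β : ℝ) : Prop :=
  (∀ s, f (-s) = -f s) ∧ f 0 = 0 ∧ 0 < b ∧ b < β ∧
    (∀ s, b < s → 0 < f s) ∧ (∀ s ∈ Icc (0:ℝ) b, f s ≤ 0) ∧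
    (∃ s ∈ Icc (0:ℝ) b, f s ≠ 0) ∧ Fint f β = 0

/-- Hypothesis (f2): `f` continuous on `[0,∞)`, C¹ on `(0,∞)`, `f' ∈ L¹(0,1)`. -/
def Hf2 (f : ℝ → ℝ) : Prop :=
  ContinuousOn f (Ici 0) ∧ (∀ s : ℝ, 0 < s → DifferentiableAt ℝ f s) ∧
    ContinuousOn (deriv f) (Ioi 0) ∧ IntegrableOn (deriv f) (Ioo 0 1)

/-- Hypothesis (f3): `f s ≥ f' s * (s - β)` for `s ≥ β`. -/
def Hf3 (f : ℝ → ℝ) (β : ℝ) : Prop := ∀ s, β ≤ s → deriv f s * (s - β) ≤ f s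

/-- Hypothesis (f4): `(F/f)' s ≥ (n-2)/(2n)` for `s > β`. -/
def Hf4 (n : ℕ) (f : ℝ → ℝ) (β : ℝ) : Prop :=
  ∀ s, β < s → ((n : ℝ) - 2) / (2 * (n : ℝ)) ≤ deriv (fun t => Fint f t / f t) s

/-- Hypothesis (f4'): `(F/f)' s ≥ (n-2)/2` for `s > β`. -/
def Hf4' (n : ℕ) (f : ℝ → ℝ) (β : ℝ) : Prop :=
  ∀ s, β < s → ((n : ℝ) - 2) / 2 ≤ deriv (fun t => Fint f t / f t) s

/-- Hypothesis (f5): `s ↦ s f' s / f s` is nonincreasing on `[β,∞)`. -/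
def Hf5 (f : ℝ → ℝ) (β : ℝ) : Prop := AntitoneOn (fun s => s * deriv f s / f s) (Ici β)

/-- Hypothesis (f6): `β f' β / f β ≤ n/(n-2)`. -/
def Hf6 (n : ℕ) (f : ℝ → ℝ) (β : ℝ) : Prop := β * deriv f β / f β ≤ (n : ℝ) / ((n : ℝ) - 2)

/-- Hypothesis (f1'): `f 0 = 0` and `s f s > 0` for `s > 0`. -/
def Hf1' (f : ℝ → ℝ) : Prop := f 0 = 0 ∧ ∀ s : ℝ, 0 < s → 0 < s * f s

/-- Hypothesis (f3'): `f s ≥ s f' s` for `s > 0`, with strict inequality at points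
arbitrarily close to `0`. -/
def Hf3' (f : ℝ → ℝ) : Prop :=
  (∀ s : ℝ, 0 < s → s * deriv f s ≤ f s) ∧
    ∀ ε : ℝ, 0 < ε → ∃ s ∈ Ioo (0:ℝ) ε, s * deriv f s < f s

/-- `v` is a C² solution of (E) on `(0,∞)`, continuous on `[0,∞)`,
with `v 0 = α` and `v' 0 = 0`. -/
def IVPsol (n : ℕ) (f : ℝ → ℝ) (α : ℝ) (v : ℝ → ℝ) : Prop :=
  v 0 = α ∧ deriv v 0 = 0 ∧ ContinuousOn v (Ici 0) ∧
    (∀ r : ℝ, 0 < r → DifferentiableAt ℝ v r ∧ DifferentiableAt ℝ (deriv v) r) ∧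
    (∀ r : ℝ, 0 < r → deriv (deriv v) r + ((n : ℝ) - 1) / r * deriv v r + f (v r) = 0)

/-- The family `α ↦ u α` of solutions of the IVP, with `u α r` and `u' α r`
continuous in `(α, r)`. -/
def Family (n : ℕ) (f : ℝ → ℝ) (u : ℝ → ℝ → ℝ) : Prop :=
  (∀ α : ℝ, 0 < α → IVPsol n f α (u α)) ∧
    ContinuousOn (fun p : ℝ × ℝ => u p.1 p.2) (Ioi 0 ×ˢ Ici 0) ∧
    ContinuousOn (fun p : ℝ × ℝ => deriv (u p.1) p.2) (Ioi 0 ×ˢ Ici 0)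

/-- The set whose supremum is `Z_k α`, given `T = T_{k-1} α`. -/
def ZsetAux (u : ℝ → ℝ → ℝ) (k : ℕ) (T α : ℝ) : Set ℝ :=
  {r | T < r ∧ ∀ s ∈ Ioo T r, (-1 : ℝ) ^ k * u α s < 0 ∧ 0 < (-1 : ℝ) ^ k * deriv (u α) s}

/-- The pair `(Z_k, T_k)`, with `T₀ = 0`;
`Z_k α = sup {r > T_{k-1} α | (-1)^k u < 0, (-1)^k u' > 0 on (T_{k-1} α, r)}` and
`T_k α = inf {r > Z_k α | u'(r, α) = 0}`. -/
def ZT (u : ℝ → ℝ → ℝ) : ℕ → (ℝ → ℝ) × (ℝ → ℝ)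
  | 0 => (fun _ => 0, fun _ => 0)
  | k + 1 =>
    let Z : ℝ → ℝ := fun α => sSup (ZsetAux u (k + 1) ((ZT u k).2 α) α)
    (Z, fun α => sInf {r | Z α < r ∧ deriv (u α) r = 0})

/-- `Z_k α` (as a real number; the genuine value when the defining set is bounded above). -/
def Zk (u : ℝ → ℝ → ℝ) (k : ℕ) (α : ℝ) : ℝ := (ZT u k).1 α

/-- `T_k α`, with `T₀ = 0`. -/
def Tk (u : ℝ → ℝ → ℝ) (k : ℕ) (α : ℝ) : ℝ := (ZT u k).2 α

/-- The defining set of `Z_k α`; `Z_k α = ∞` iff this set is unbounded above. -/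
def ZsetK (u : ℝ → ℝ → ℝ) (k : ℕ) (α : ℝ) : Set ℝ := ZsetAux u k (Tk u (k - 1) α) α

open Classical in
/-- The value of `u (·, α)` at `Z_k α`, as a limit `r → ∞` when `Z_k α = ∞`. -/
def uAtZ (u : ℝ → ℝ → ℝ) (k : ℕ) (α : ℝ) : ℝ :=
  if BddAbove (ZsetK u k α) then u α (Zk u k α) else limUnder atTop (u α)

open Classical in
/-- The value of `u' (·, α)` at `Z_k α`, as a limit `r → ∞` when `Z_k α = ∞`. -/
def duAtZ (u : ℝ → ℝ → ℝ) (k : ℕ) (α : ℝ) : ℝ :=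
  if BddAbove (ZsetK u k α) then deriv (u α) (Zk u k α) else limUnder atTop (deriv (u α))

open Classical in
/-- `Z_k α` as an extended real number. -/
def ZkE (u : ℝ → ℝ → ℝ) (k : ℕ) (α : ℝ) : WithTop ℝ :=
  if BddAbove (ZsetK u k α) then (Zk u k α : WithTop ℝ) else ⊤

/-- Membership in `F̃_k` (for `α ∈ N_{k-1}`): `(-1)^k u' (r, α) < 0` for all `r > Z_{k-1} α`. -/
def Ftil (u : ℝ → ℝ → ℝ) (k : ℕ) (α : ℝ) : Prop :=
  ∀ r, Zk u (k - 1) α < r → (-1 : ℝ) ^ k * deriv (u α) r < 0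

/-- The sets `N_k` (with `N₀ := (0,∞)`). -/
def Nk (u : ℝ → ℝ → ℝ) : ℕ → Set ℝ
  | 0 => Ioi 0
  | 1 => {α | 0 < α ∧ uAtZ u 1 α = 0 ∧ duAtZ u 1 α < 0}
  | k + 2 => {α | α ∈ Nk u (k + 1) ∧ ¬Ftil u (k + 2) α ∧ uAtZ u (k + 2) α = 0 ∧
      0 < (-1 : ℝ) ^ (k + 2) * duAtZ u (k + 2) α}

/-- The sets `G_k`. -/
def Gk (u : ℝ → ℝ → ℝ) : ℕ → Set ℝ
  | 0 => ∅
  | 1 => {α | 0 < α ∧ uAtZ u 1 α = 0 ∧ duAtZ u 1 α = 0}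
  | k + 2 => {α | α ∈ Nk u (k + 1) ∧ ¬Ftil u (k + 2) α ∧ uAtZ u (k + 2) α = 0 ∧
      duAtZ u (k + 2) α = 0}

/-- The set `F̃_k` (for `k ≥ 2`). -/
def FtilSet (u : ℝ → ℝ → ℝ) (k : ℕ) : Set ℝ := {α | α ∈ Nk u (k - 1) ∧ Ftil u k α}

/-- The set `F_k` (for `k ≥ 2`). -/
def Fk (u : ℝ → ℝ → ℝ) (k : ℕ) : Set ℝ :=
  {α | α ∈ Nk u (k - 1) ∧ ¬Ftil u k α ∧ (-1 : ℝ) ^ k * uAtZ u k α < 0}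

/-- The sets `P_k`. -/
def Pk (u : ℝ → ℝ → ℝ) : ℕ → Set ℝ
  | 0 => ∅
  | 1 => {α | 0 < α ∧ 0 < uAtZ u 1 α}
  | k + 2 => FtilSet u (k + 2) ∪ Fk u (k + 2)

/-- The set of extremal points (zeros of `u' (·, α)`) in `[0, A]`. -/
def ExtSet (u : ℝ → ℝ → ℝ) (α A : ℝ) : Set ℝ := {r | r ∈ Icc 0 A ∧ deriv (u α) r = 0}

/-- The conclusion of the δ₁-lemma (Lemma 4.1): every solution with initial value in
`(α*-δ₁, α*+δ₁)` has exactly `k` extremal points in `[0, T_{k-1}(α*) + a]`, with minimum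
values `< -β` and maximum values `> β`; moreover any two such solutions intersect between
any two of their consecutive extremal points, and in `(T_{k-1}(α*), Z_k(α*))`. -/
def DeltaOneLemma (f : ℝ → ℝ) (β : ℝ) (u : ℝ → ℝ → ℝ) (k : ℕ) (αs a δ₁ : ℝ) : Prop :=
  0 < a ∧ 0 < δ₁ ∧
    (∀ α ∈ Ioo (αs - δ₁) (αs + δ₁),
      (ExtSet u α (Tk u (k - 1) αs + a)).Finite ∧
        (ExtSet u α (Tk u (k - 1) αs + a)).ncard = k ∧
        ∀ r ∈ ExtSet u α (Tk u (k - 1) αs + a),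
          (IsLocalMin (u α) r → u α r < -β) ∧ (IsLocalMax (u α) r → β < u α r)) ∧
    ∀ α₁ ∈ Ioo (αs - δ₁) (αs + δ₁), ∀ α₂ ∈ Ioo (αs - δ₁) (αs + δ₁), α₁ < α₂ →
      (∀ i : ℕ, 1 ≤ i → i ≤ k - 1 →
        ∃ t, max (Tk u (i - 1) α₁) (Tk u (i - 1) α₂) < t ∧
          t < min (Tk u i α₁) (Tk u i α₂) ∧ u α₁ t = u α₂ t) ∧
      ∃ t, Tk u (k - 1) αs < t ∧ (BddAbove (ZsetK u k αs) → t < Zk u k αs) ∧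
        u α₁ t = u α₂ t

/-- `ρ` is the inverse of the monotone branch of `v` on `[t₁, t₂]`, whose set of values
is `[m, M]`. -/
def InvBranch (v ρ : ℝ → ℝ) (t₁ t₂ m M : ℝ) : Prop :=
  (∀ s ∈ Icc m M, ρ s ∈ Icc t₁ t₂ ∧ v (ρ s) = s) ∧
    ∀ s ∈ Ioo m M, HasDerivAt ρ (1 / deriv v (ρ s)) s

/-- `ρ` inverts a decreasing branch of `v` over the value interval `[m, M]`, along which
`(v')² + 2F > 0`. -/
def DecBranchInv (f : ℝ → ℝ) (v ρ : ℝ → ℝ) (m M : ℝ) : Prop :=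
  ∀ s ∈ Icc m M, 0 ≤ ρ s ∧ v (ρ s) = s ∧ deriv v (ρ s) < 0 ∧
    HasDerivAt ρ (1 / deriv v (ρ s)) s ∧ 0 < (deriv v (ρ s)) ^ 2 + 2 * Fint f s

/-- The functional `Q(s) = -4 (F/f)(s) r/r' - r²/(r')² - 2 r² F(s) + H(s)` computed along
the branch inverse `ρ`. -/
def Qfun (f H ρ : ℝ → ℝ) (s : ℝ) : ℝ :=
  -4 * (Fint f s / f s) * (ρ s / deriv ρ s) - (ρ s) ^ 2 / (deriv ρ s) ^ 2 -
    2 * (ρ s) ^ 2 * Fint f s + H s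

/-- The functional `P(s) = -2n (F/f)(s) r^{n-1}/r' - r^n/(r')² - 2 r^n F(s)`. -/
def Pfun (n : ℕ) (f : ℝ → ℝ) (ρ : ℝ → ℝ) (s : ℝ) : ℝ :=
  -(2 * (n : ℝ)) * (Fint f s / f s) * (ρ s ^ (n - 1) / deriv ρ s) -
    ρ s ^ n / (deriv ρ s) ^ 2 - 2 * ρ s ^ n * Fint f s

/-- The functional `W(s) = r(s) √((u'(r(s)))² + 2 F(s))`. -/
def Wfun (f v ρ : ℝ → ℝ) (s : ℝ) : ℝ :=
  ρ s * Real.sqrt ((deriv v (ρ s)) ^ 2 + 2 * Fint f s)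

/-- The functional `W̃(s) = r(s)^{n-1} √((u'(r(s)))² + 2 F(s))`. -/
def Wtil (n : ℕ) (f : ℝ → ℝ) (v ρ : ℝ → ℝ) (s : ℝ) : ℝ :=
  ρ s ^ (n - 1) * Real.sqrt ((deriv v (ρ s)) ^ 2 + 2 * Fint f s)

/-- `v` changes sign at `z ∈ (0,∞)`: `v z = 0` and `v` takes both signs in every
neighborhood of `z` (within `(0,∞)`). -/
def SignChange (v : ℝ → ℝ) (z : ℝ) : Prop :=
  v z = 0 ∧ ∀ ε : ℝ, 0 < ε →
    (∃ x ∈ Ioo (z - ε) (z + ε) ∩ Ioi 0, 0 < v x) ∧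
    (∃ x ∈ Ioo (z - ε) (z + ε) ∩ Ioi 0, v x < 0)

/-- `v` has exactly `m` sign changes in `(0,∞)`. -/
def ExactSignChanges (v : ℝ → ℝ) (m : ℕ) : Prop :=
  {z | 0 < z ∧ SignChange v z}.Finite ∧ {z | 0 < z ∧ SignChange v z}.ncard = m

/-- Bound state: a C² solution of (E) on `(0,∞)` with `v' 0 = 0` and `v r → 0` as `r → ∞`. -/
def BoundState (n : ℕ) (f : ℝ → ℝ) (v : ℝ → ℝ) : Prop :=
  ContinuousOn v (Ici 0) ∧
    (∀ r : ℝ, 0 < r → DifferentiableAt ℝ v r ∧ DifferentiableAt ℝ (deriv v) r) ∧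
    (∀ r : ℝ, 0 < r → deriv (deriv v) r + ((n : ℝ) - 1) / r * deriv v r + f (v r) = 0) ∧
    deriv v 0 = 0 ∧ Tendsto v atTop (nhds 0)

/-- Solution of the Dirichlet problem on the ball of radius `R`. -/
def DirichletSol (n : ℕ) (f : ℝ → ℝ) (R : ℝ) (v : ℝ → ℝ) : Prop :=
  ContinuousOn v (Icc 0 R) ∧
    (∀ r ∈ Ioo (0:ℝ) R, DifferentiableAt ℝ v r ∧ DifferentiableAt ℝ (deriv v) r) ∧
    (∀ r ∈ Ioo (0:ℝ) R, deriv (deriv v) r + ((n : ℝ) - 1) / r * deriv v r + f (v r) = 0) ∧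
    deriv v 0 = 0 ∧ v R = 0

end
end Paper

open Paper Set Filter MeasureTheory

/-!
Along a decreasing branch of a solution use the value `s` as the independent variable, with radius
`r s` and slope `p s`. Condition (f4') makes `Q` nondecreasing in `s` where `|s| ≥ β`, and
`Q₂ - Q₁` nondecreasing as long as `r₂ p₂ ≤ r₁ p₁`, so that `Q₂ < Q₁` propagates downwards.

On `[β, M₁]` a crossing of `r₁ p₁` and `r₂ p₂` at a point where `Q₂ < Q₁` forces `r₁ < r₂`, hence
`r₁ p₁ - r₂ p₂` would be decreasing there; so `r₂ p₂ < r₁ p₁` down to `β`. If `r₂ β ≤ r₁ β`, then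
on `[-β, β]`, where `F ≤ 0`, the functional `W = r √(u'² + 2F)` transports this inequality to
`-β`. Otherwise one starts from the largest `s < β` with `r₁ s = r₂ s`; it exists since the
branches intersect, and there `p₂ < p₁`. Below `-β` the inequalities `r₂ ≤ r₁` and `Q₂ < Q₁`
exclude a crossing of `r₁ p₁` and `r₂ p₂`, so `u₁` comes to rest at the larger value.

For `α` near `α* ∈ G_k` the solution has these branches: the energy is nonincreasing in `r` and at
`T_{k-1}(α*)` it is still positive, so the critical values alternate above `β` and below `-β`.
-/

namespace Paper

section Calculus

variable {g g' : ℝ → ℝ} {c d : ℝ}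

lemma monotoneOn_Icc_of_hasDerivAt_nonneg (hg : ContinuousOn g (Icc c d))
    (hg' : ∀ s ∈ Ioo c d, HasDerivAt g (g' s) s) (h : ∀ s ∈ Ioo c d, 0 ≤ g' s) :
    MonotoneOn g (Icc c d) := by
  refine monotoneOn_of_hasDerivWithinAt_nonneg (convex_Icc c d) hg
    (fun s hs => (hg' s ?_).hasDerivWithinAt) fun s hs => h s ?_ <;> rwa [interior_Icc] at hs

lemma strictMonoOn_Icc_of_hasDerivAt_pos (hg : ContinuousOn g (Icc c d))
    (hg' : ∀ s ∈ Ioo c d, HasDerivAt g (g' s) s) (h : ∀ s ∈ Ioo c d, 0 < g' s) :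
    StrictMonoOn g (Icc c d) := by
  refine strictMonoOn_of_hasDerivWithinAt_pos (convex_Icc c d) hg
    (fun s hs => (hg' s ?_).hasDerivWithinAt) fun s hs => h s ?_ <;> rwa [interior_Icc] at hs

lemma exists_last_zero (hcd : c ≤ d) (hg : ContinuousOn g (Icc c d)) (hc : g c ≤ 0)
    (hd : 0 < g d) : ∃ x ∈ Ico c d, g x = 0 ∧ ∀ s ∈ Ioc x d, 0 < g s := by
  have hcompact : IsCompact (Icc c d ∩ g ⁻¹' Iic 0) :=
    isCompact_Icc.of_isClosed_subset (hg.preimage_isClosed_of_isClosed isClosed_Icc isClosed_Iic)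
      inter_subset_left
  obtain ⟨x, ⟨hx, hgx : g x ≤ 0⟩, hmax⟩ :=
    hcompact.exists_isGreatest ⟨c, left_mem_Icc.2 hcd, hc⟩
  have hpos : ∀ s ∈ Ioc x d, 0 < g s := fun s hs => by
    by_contra! hneg
    exact hs.1.not_ge (hmax ⟨⟨hx.1.trans hs.1.le, hs.2⟩, hneg⟩)
  have hxd : x < d := hx.2.lt_of_ne fun h => hd.not_ge (h ▸ hgx)
  refine ⟨x, ⟨hx.1, hxd⟩, ?_, hpos⟩
  obtain ⟨y, hy, hy0⟩ := intermediate_value_Icc hx.2 (hg.mono (Icc_subset_Icc_left hx.1))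
    ⟨hgx, hd.le⟩
  rcases hy.1.eq_or_lt with rfl | h
  · exact hy0
  · exact absurd hy0 (hpos y ⟨h, hy.2⟩).ne'

lemma pos_on_Icc_of_ne_zero_of_pos_on_Ioc (hg : ContinuousOn g (Icc c d)) (hd : 0 < g d)
    (h : ∀ x ∈ Ico c d, (∀ s ∈ Ioc x d, 0 < g s) → g x ≠ 0) : ∀ x ∈ Icc c d, 0 < g x := by
  intro x hx
  by_contra! hneg
  obtain ⟨y, hy, hy0, hpos⟩ :=
    exists_last_zero hx.2 (hg.mono (Icc_subset_Icc_left hx.1)) hneg hd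
  exact h y ⟨hx.1.trans hy.1, hy.2⟩ hpos hy0

lemma not_pos_on_Ioc_of_hasDerivAt_neg {a x : ℝ} (hg : HasDerivAt g a x) (ha : a < 0)
    (hx : g x = 0) (hxd : x < d) : ¬ ∀ s ∈ Ioc x d, 0 < g s := by
  intro hpos
  have hneg := (eventually_nhdsWithin_sign_eq_of_deriv_neg (hg.deriv ▸ ha) hx).filter_mono
    (nhdsWithin_le_nhds (s := Ioi x))
  obtain ⟨s, hsign, hs⟩ := (hneg.and (Ioc_mem_nhdsGT hxd)).exists
  rw [sign_pos (hpos s hs), sign_neg (sub_neg.2 hs.1)] at hsign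
  exact absurd hsign (by decide)

/- A backward Grönwall inequality: `g s * exp (-K s)` is nonincreasing as long as `g` is
positive. -/
lemma pos_on_Icc_of_hasDerivAt_le_mul {K : ℝ} (hg : ContinuousOn g (Icc c d)) (hd : 0 < g d)
    (hg' : ∀ s ∈ Ioo c d, HasDerivAt g (g' s) s)
    (h : ∀ s ∈ Ioo c d, 0 < g s → g' s ≤ K * g s) : ∀ x ∈ Icc c d, 0 < g x := by
  refine pos_on_Icc_of_ne_zero_of_pos_on_Ioc hg hd fun x hx hpos hx0 => ?_
  have hsub : Ioo x d ⊆ Ioo c d := Ioo_subset_Ioo_left hx.1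
  have hmono : MonotoneOn (fun s => -g s * Real.exp (-K * s)) (Icc x d) := by
    refine monotoneOn_Icc_of_hasDerivAt_nonneg (g' := fun s => (K * g s - g' s) *
      Real.exp (-K * s)) ((hg.mono (Icc_subset_Icc_left hx.1)).neg.mul (by fun_prop))
      (fun s hs => ?_) fun s hs => ?_
    · have hexp : HasDerivAt (fun t => Real.exp (-K * t)) (Real.exp (-K * s) * (-K)) s := by
        simpa using ((hasDerivAt_id s).const_mul (-K)).exp
      exact ((hg' s (hsub hs)).neg.mul hexp).congr_deriv (by simp only [Pi.neg_apply]; ring)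
    · exact mul_nonneg (sub_nonneg.2 (h s (hsub hs) (hpos s ⟨hs.1, hs.2.le⟩)))
        (Real.exp_pos _).le
  have := hmono (left_mem_Icc.2 hx.2.le) (right_mem_Icc.2 hx.2.le) hx.2.le
  simp only [hx0, neg_zero, zero_mul, neg_mul] at this
  linarith [mul_pos hd (Real.exp_pos (-(K * d)))]

end Calculus

section Primitive

variable {n : ℕ} {f H : ℝ → ℝ} {b β s : ℝ}

lemma hasDerivAt_Fint (hf : Continuous f) (s : ℝ) : HasDerivAt (Fint f) (f s) s :=
  intervalIntegral.integral_hasDerivAt_right (hf.intervalIntegrable _ _)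
    (hf.stronglyMeasurableAtFilter _ _) hf.continuousAt

lemma continuous_Fint (hf : Continuous f) : Continuous (Fint f) :=
  continuous_iff_continuousAt.2 fun s => (hasDerivAt_Fint hf s).continuousAt

lemma Hf1.map_neg (h1 : Hf1 f b β) (s : ℝ) : f (-s) = -f s := h1.1 s

lemma Hf1.b_lt_β (h1 : Hf1 f b β) : b < β := h1.2.2.2.1

lemma Hf1.β_pos (h1 : Hf1 f b β) : 0 < β := h1.2.2.1.trans h1.b_lt_β

lemma Hf1.pos (h1 : Hf1 f b β) (hs : β ≤ s) : 0 < f s := h1.2.2.2.2.1 s (h1.b_lt_β.trans_le hs)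

lemma Hf1.neg (h1 : Hf1 f b β) (hs : s ≤ -β) : f s < 0 := by
  have := h1.pos (le_neg.2 hs)
  rwa [h1.map_neg, neg_pos] at this

lemma Fint_neg (hodd : ∀ s, f (-s) = -f s) (s : ℝ) : Fint f (-s) = Fint f s := by
  have h := intervalIntegral.integral_comp_neg (a := 0) (b := s) f
  simp only [hodd, intervalIntegral.integral_neg, neg_zero] at h
  rw [Fint, intervalIntegral.integral_symm, ← h, neg_neg, Fint]

lemma Hf1.Fint_β (h1 : Hf1 f b β) : Fint f β = 0 := h1.2.2.2.2.2.2.2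

lemma Hf1.Fint_neg_β (h1 : Hf1 f b β) : Fint f (-β) = 0 := by
  rw [Fint_neg h1.map_neg, h1.Fint_β]

lemma Hf1.Fint_abs (h1 : Hf1 f b β) (s : ℝ) : Fint f |s| = Fint f s := by
  rcases abs_choice s with h | h <;> rw [h]
  exact Fint_neg h1.map_neg s

lemma Hf1.Fint_pos (hf : Continuous f) (h1 : Hf1 f b β) (hs : β < |s|) : 0 < Fint f s := by
  rw [← h1.Fint_abs, ← h1.Fint_β]
  exact strictMonoOn_Icc_of_hasDerivAt_pos (continuous_Fint hf).continuousOn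
    (fun x _ => hasDerivAt_Fint hf x) (fun x hx => h1.pos hx.1.le)
    (left_mem_Icc.2 hs.le) (right_mem_Icc.2 hs.le) hs

lemma Hf1.Fint_nonneg_of_le (hf : Continuous f) (h1 : Hf1 f b β) (hs : s ≤ -β) :
    0 ≤ Fint f s := by
  rcases hs.eq_or_lt with rfl | hs
  · exact h1.Fint_neg_β.ge
  · exact (h1.Fint_pos hf (lt_abs.2 (.inr (lt_neg.2 hs)))).le

lemma Hf1.Fint_nonpos (hf : Continuous f) (h1 : Hf1 f b β) (hs : |s| ≤ β) : Fint f s ≤ 0 := by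
  rw [← h1.Fint_abs]
  obtain ⟨-, -, -, -, hpos, hneg, -, hFβ⟩ := h1
  rcases le_total |s| b with hsb | hbs
  · have hmono : MonotoneOn (-Fint f) (Icc 0 |s|) :=
      monotoneOn_Icc_of_hasDerivAt_nonneg (continuous_Fint hf).neg.continuousOn
        (fun x _ => (hasDerivAt_Fint hf x).neg)
        fun x hx => neg_nonneg.2 (hneg x ⟨hx.1.le, hx.2.le.trans hsb⟩)
    simpa [Fint] using
      hmono (left_mem_Icc.2 (abs_nonneg s)) (right_mem_Icc.2 (abs_nonneg s)) (abs_nonneg s)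
  · rw [← hFβ]
    exact monotoneOn_Icc_of_hasDerivAt_nonneg (continuous_Fint hf).continuousOn
      (fun x _ => hasDerivAt_Fint hf x) (fun x hx => (hpos x (hbs.trans_lt hx.1)).le)
      (left_mem_Icc.2 hs) (right_mem_Icc.2 hs) hs

/-- The conditions on `f` and `H` over a set `S` of values which make the functional `Q` monotone
along decreasing branches: `f` has no zeros, `(F/f)' ≥ (n-2)/2` and `H' = -4(n-2) F/f`. -/
structure QRegularOn (n : ℕ) (f H : ℝ → ℝ) (S : Set ℝ) : Prop where
  ne_zero : ∀ s ∈ S, f s ≠ 0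
  differentiableAt_ratio : ∀ s ∈ interior S, DifferentiableAt ℝ (fun t => Fint f t / f t) s
  le_deriv_ratio : ∀ s ∈ interior S, ((n : ℝ) - 2) / 2 ≤ deriv (fun t => Fint f t / f t) s
  hasDerivAt_H : ∀ s ∈ S, HasDerivAt H (-4 * ((n : ℝ) - 2) * (Fint f s / f s)) s

lemma QRegularOn.mono {S T : Set ℝ} (hS : QRegularOn n f H S) (hTS : T ⊆ S) :
    QRegularOn n f H T where
  ne_zero s hs := hS.ne_zero s (hTS hs)
  differentiableAt_ratio s hs := hS.differentiableAt_ratio s (interior_mono hTS hs)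
  le_deriv_ratio s hs := hS.le_deriv_ratio s (interior_mono hTS hs)
  hasDerivAt_H s hs := hS.hasDerivAt_H s (hTS hs)

lemma Hf1.differentiableAt_ratio (hf : Continuous f) (h1 : Hf1 f b β)
    (hfd : ∀ t, β < t → DifferentiableAt ℝ f t) (hs : β < s) :
    DifferentiableAt ℝ (fun t => Fint f t / f t) s :=
  (hasDerivAt_Fint hf s).differentiableAt.div (hfd s hs) (h1.pos hs.le).ne'

lemma Hf1.qRegularOn_Ici (hf : Continuous f) (h1 : Hf1 f b β) (h4 : Hf4' n f β)
    (hfd : ∀ s, β < s → DifferentiableAt ℝ f s)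
    (hH : ∀ s, f s ≠ 0 → HasDerivAt H (-4 * ((n : ℝ) - 2) * (Fint f s / f s)) s) :
    QRegularOn n f H (Ici β) where
  ne_zero s hs := (h1.pos hs).ne'
  differentiableAt_ratio s hs := h1.differentiableAt_ratio hf hfd (by rwa [interior_Ici] at hs)
  le_deriv_ratio s hs := h4 s (by rwa [interior_Ici] at hs)
  hasDerivAt_H s hs := hH s (h1.pos hs).ne'

lemma Hf1.qRegularOn_Iic (hf : Continuous f) (h1 : Hf1 f b β) (h4 : Hf4' n f β)
    (hfd : ∀ s, β < s → DifferentiableAt ℝ f s)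
    (hH : ∀ s, f s ≠ 0 → HasDerivAt H (-4 * ((n : ℝ) - 2) * (Fint f s / f s)) s) :
    QRegularOn n f H (Iic (-β)) := by
  have hodd : ∀ t, Fint f t / f t = -(Fint f (-t) / f (-t)) := fun t => by
    rw [Fint_neg h1.map_neg, h1.map_neg, div_neg, neg_neg]
  have hderiv : ∀ s ∈ interior (Iic (-β)), HasDerivAt (fun t => Fint f t / f t)
      (deriv (fun t => Fint f t / f t) (-s)) s := fun s hs => by
    rw [interior_Iic, mem_Iio, lt_neg] at hs
    have := ((h1.differentiableAt_ratio hf hfd hs).hasDerivAt.comp s (hasDerivAt_neg s)).neg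
    exact (this.congr_deriv (by ring)).congr_of_eventuallyEq (.of_forall hodd)
  refine ⟨fun s hs => (h1.neg hs).ne, fun s hs => (hderiv s hs).differentiableAt, fun s hs => ?_,
    fun s hs => hH s (h1.neg hs).ne⟩
  rw [(hderiv s hs).deriv]
  rw [interior_Iic, mem_Iio, lt_neg] at hs
  exact h4 (-s) hs

end Primitive

/-! ### Decreasing branches in inverse coordinates -/

/-- The functional `Q = -4 (F/f) r u' - (r u')² - 2 r² F + H` in terms of the radius `r s` and the
slope `p s` at which a solution takes the value `s`. Away from critical values this is `Qfun` with
`r' = 1 / p`; at a critical value, where `r' = ∞`, it has the expected value. -/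
noncomputable def phaseQ (f H r p : ℝ → ℝ) (s : ℝ) : ℝ :=
  -4 * (Fint f s / f s) * (r s * p s) - (r s * p s) ^ 2 - 2 * r s ^ 2 * Fint f s + H s

/-- The energy `u'² + 2F` as a function of the value `s` of the solution. -/
noncomputable def phaseEnergy (f p : ℝ → ℝ) (s : ℝ) : ℝ := p s ^ 2 + 2 * Fint f s

/-- The functional `W = r √(u'² + 2F)` in terms of radius and slope. -/
noncomputable def phaseW (f r p : ℝ → ℝ) (s : ℝ) : ℝ := r s * √(phaseEnergy f p s)

/-- A decreasing branch of a radial solution over the interval `[c, d]` of its values, in inverse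
coordinates: `r s` is the radius at which the value `s` is attained and `p s` the derivative of the
solution there. The slope may vanish at the endpoints and the radius at `d`, so that branches
joining consecutive extrema are included. -/
structure DecreasingBranch (n : ℕ) (f r p : ℝ → ℝ) (c d : ℝ) : Prop where
  continuousOn_r : ContinuousOn r (Icc c d)
  continuousOn_p : ContinuousOn p (Icc c d)
  r_nonneg : ∀ s ∈ Icc c d, 0 ≤ r s
  p_nonpos : ∀ s ∈ Icc c d, p s ≤ 0
  r_pos : ∀ s ∈ Ico c d, 0 < r s
  p_neg : ∀ s ∈ Ioo c d, p s < 0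
  hasDerivAt_r : ∀ s ∈ Ioo c d, HasDerivAt r (1 / p s) s
  hasDerivAt_p : ∀ s ∈ Ioo c d, HasDerivAt p (-((n : ℝ) - 1) / r s - f s / p s) s

namespace DecreasingBranch

section SingleBranch

variable {n : ℕ} {f H r p : ℝ → ℝ} {c d s : ℝ}

lemma mono {c' d' : ℝ} (B : DecreasingBranch n f r p c d) (hc : c ≤ c') (hd : d' ≤ d) :
    DecreasingBranch n f r p c' d' where
  continuousOn_r := B.continuousOn_r.mono (Icc_subset_Icc hc hd)
  continuousOn_p := B.continuousOn_p.mono (Icc_subset_Icc hc hd)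
  r_nonneg s hs := B.r_nonneg s (Icc_subset_Icc hc hd hs)
  p_nonpos s hs := B.p_nonpos s (Icc_subset_Icc hc hd hs)
  r_pos s hs := B.r_pos s (Ico_subset_Ico hc hd hs)
  p_neg s hs := B.p_neg s (Ioo_subset_Ioo hc hd hs)
  hasDerivAt_r s hs := B.hasDerivAt_r s (Ioo_subset_Ioo hc hd hs)
  hasDerivAt_p s hs := B.hasDerivAt_p s (Ioo_subset_Ioo hc hd hs)

lemma rp_nonpos (B : DecreasingBranch n f r p c d) (hs : s ∈ Icc c d) : r s * p s ≤ 0 :=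
  mul_nonpos_of_nonneg_of_nonpos (B.r_nonneg s hs) (B.p_nonpos s hs)

lemma rp_neg (B : DecreasingBranch n f r p c d) (hs : s ∈ Ioo c d) : r s * p s < 0 :=
  mul_neg_of_pos_of_neg (B.r_pos s (Ioo_subset_Ico_self hs)) (B.p_neg s hs)

lemma continuousOn_rp (B : DecreasingBranch n f r p c d) :
    ContinuousOn (fun s => r s * p s) (Icc c d) := B.continuousOn_r.mul B.continuousOn_p

lemma hasDerivAt_rp (B : DecreasingBranch n f r p c d) (hs : s ∈ Ioo c d) :
    HasDerivAt (fun t => r t * p t) (-((n : ℝ) - 2) - r s ^ 2 * (f s / (r s * p s))) s := by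
  have hp := (B.p_neg s hs).ne
  have hr := (B.r_pos s (Ioo_subset_Ico_self hs)).ne'
  refine ((B.hasDerivAt_r s hs).mul (B.hasDerivAt_p s hs)).congr_deriv ?_
  field_simp
  ring

lemma continuousOn_phaseQ (hf : Continuous f) (hS : QRegularOn n f H (Icc c d))
    (B : DecreasingBranch n f r p c d) : ContinuousOn (phaseQ f H r p) (Icc c d) := by
  have hF : ContinuousOn (Fint f) (Icc c d) := (continuous_Fint hf).continuousOn
  have hH : ContinuousOn H (Icc c d) := fun s hs =>
    (hS.hasDerivAt_H s hs).continuousAt.continuousWithinAt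
  have hq := hF.div hf.continuousOn hS.ne_zero
  exact ((((continuousOn_const.mul hq).mul B.continuousOn_rp).sub (B.continuousOn_rp.pow 2)).sub
    ((continuousOn_const.mul (B.continuousOn_r.pow 2)).mul hF)).add hH

lemma hasDerivAt_phaseQ (hf : Continuous f) (hS : QRegularOn n f H (Icc c d))
    (B : DecreasingBranch n f r p c d) (hs : s ∈ Ioo c d) :
    HasDerivAt (phaseQ f H r p)
      (r s * p s * (2 * ((n : ℝ) - 2) - 4 * deriv (fun t => Fint f t / f t) s)) s := by
  have hp := (B.p_neg s hs).ne
  have hfs := hS.ne_zero s (Ioo_subset_Icc_self hs)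
  have hratio := (hS.differentiableAt_ratio s (by rwa [interior_Icc])).hasDerivAt
  have hV := B.hasDerivAt_rp hs
  have h := ((((hratio.const_mul (-4)).mul hV).sub (hV.pow 2)).sub
    ((((B.hasDerivAt_r s hs).pow 2).const_mul 2).mul (hasDerivAt_Fint hf s))).add
    (hS.hasDerivAt_H s (Ioo_subset_Icc_self hs))
  refine HasDerivAt.congr_deriv (f := phaseQ f H r p) h ?_
  simp only [Pi.pow_apply]
  field_simp
  ring

lemma monotoneOn_phaseQ (hf : Continuous f) (hS : QRegularOn n f H (Icc c d))
    (B : DecreasingBranch n f r p c d) : MonotoneOn (phaseQ f H r p) (Icc c d) := by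
  refine monotoneOn_Icc_of_hasDerivAt_nonneg (B.continuousOn_phaseQ hf hS)
    (fun s hs => B.hasDerivAt_phaseQ hf hS hs) fun s hs =>
      mul_nonneg_of_nonpos_of_nonpos (B.rp_neg hs).le ?_
  linarith [hS.le_deriv_ratio s (by rwa [interior_Icc])]

lemma hasDerivAt_phaseEnergy (hf : Continuous f) (B : DecreasingBranch n f r p c d)
    (hs : s ∈ Ioo c d) :
    HasDerivAt (phaseEnergy f p) (-2 * ((n : ℝ) - 1) * p s / r s) s := by
  have hp := (B.p_neg s hs).ne
  have hr := (B.r_pos s (Ioo_subset_Ico_self hs)).ne'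
  refine HasDerivAt.congr_deriv (f := phaseEnergy f p)
    (((B.hasDerivAt_p s hs).pow 2).add ((hasDerivAt_Fint hf s).const_mul 2)) ?_
  field_simp
  ring

lemma continuousOn_phaseEnergy (hf : Continuous f) (B : DecreasingBranch n f r p c d) :
    ContinuousOn (phaseEnergy f p) (Icc c d) :=
  (B.continuousOn_p.pow 2).add (continuousOn_const.mul (continuous_Fint hf).continuousOn)

lemma monotoneOn_phaseEnergy (hn : 1 ≤ n) (hf : Continuous f)
    (B : DecreasingBranch n f r p c d) : MonotoneOn (phaseEnergy f p) (Icc c d) := by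
  refine monotoneOn_Icc_of_hasDerivAt_nonneg (B.continuousOn_phaseEnergy hf)
    (fun s hs => B.hasDerivAt_phaseEnergy hf hs) fun s hs => ?_
  have hn1 : (0 : ℝ) ≤ n - 1 := by simpa using hn
  exact div_nonneg (mul_nonneg_of_nonpos_of_nonpos (by linarith) (B.p_neg s hs).le)
    (B.r_pos s (Ioo_subset_Ico_self hs)).le

lemma continuousOn_phaseW (hf : Continuous f) (B : DecreasingBranch n f r p c d) :
    ContinuousOn (phaseW f r p) (Icc c d) :=
  B.continuousOn_r.mul (B.continuousOn_phaseEnergy hf).sqrt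

lemma hasDerivAt_phaseW (hf : Continuous f) (B : DecreasingBranch n f r p c d)
    (hs : s ∈ Ioo c d) (hE : 0 < phaseEnergy f p s) :
    HasDerivAt (phaseW f r p)
      (√(phaseEnergy f p s) / p s - ((n : ℝ) - 1) * (p s / √(phaseEnergy f p s))) s := by
  have hp := (B.p_neg s hs).ne
  have hr := (B.r_pos s (Ioo_subset_Ico_self hs)).ne'
  have hsqrt := (Real.sqrt_pos.2 hE).ne'
  refine HasDerivAt.congr_deriv (f := phaseW f r p)
    ((B.hasDerivAt_r s hs).mul ((B.hasDerivAt_phaseEnergy hf hs).sqrt hE.ne')) ?_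
  field_simp
  ring

end SingleBranch

section TwoBranches

variable {n : ℕ} {f H r₁ p₁ r₂ p₂ : ℝ → ℝ} {c d : ℝ}

lemma r_le_of_rp_le (B₁ : DecreasingBranch n f r₁ p₁ c d) (B₂ : DecreasingBranch n f r₂ p₂ c d)
    (hV : ∀ s ∈ Ioo c d, r₂ s * p₂ s ≤ r₁ s * p₁ s) (hd : 0 < r₁ d) (hr : r₂ d ≤ r₁ d) :
    ∀ s ∈ Icc c d, r₂ s ≤ r₁ s := by
  have hpos : ∀ s ∈ Icc c d, 0 < r₁ s := fun s hs =>
    hs.2.eq_or_lt.elim (fun h => h ▸ hd) fun h => B₁.r_pos s ⟨hs.1, h⟩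
  have hmono : MonotoneOn (fun s => r₂ s / r₁ s) (Icc c d) := by
    refine monotoneOn_Icc_of_hasDerivAt_nonneg
      (B₂.continuousOn_r.div B₁.continuousOn_r fun s hs => (hpos s hs).ne')
      (fun s hs => (B₂.hasDerivAt_r s hs).div (B₁.hasDerivAt_r s hs)
        (hpos s (Ioo_subset_Icc_self hs)).ne') fun s hs => div_nonneg ?_ (sq_nonneg _)
    have hp₁ := B₁.p_neg s hs
    have hp₂ := B₂.p_neg s hs
    have : 1 / p₂ s * r₁ s - r₂ s * (1 / p₁ s) =
        (r₁ s * p₁ s - r₂ s * p₂ s) / (p₁ s * p₂ s) := by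
      field_simp [hp₁.ne, hp₂.ne]
    rw [this]
    exact div_nonneg (sub_nonneg.2 (hV s hs)) (mul_pos_of_neg_of_neg hp₁ hp₂).le
  intro s hs
  have := hmono hs (right_mem_Icc.2 (hs.1.trans hs.2)) hs.2
  rw [← div_le_one (hpos s hs)]
  exact this.trans ((div_le_one hd).2 hr)

lemma r_pos_of_rp_lt {s : ℝ} (B₁ : DecreasingBranch n f r₁ p₁ c d)
    (B₂ : DecreasingBranch n f r₂ p₂ c d) (hs : s ∈ Icc c d) (hr : r₂ s ≤ r₁ s)
    (hV : r₂ s * p₂ s < r₁ s * p₁ s) : 0 < r₁ s := by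
  refine ((B₂.r_nonneg s hs).lt_of_ne' fun h => ?_).trans_le hr
  rw [h, zero_mul] at hV
  exact hV.not_ge (B₁.rp_nonpos hs)

lemma monotoneOn_r_sub_of_p_le (B₁ : DecreasingBranch n f r₁ p₁ c d)
    (B₂ : DecreasingBranch n f r₂ p₂ c d) (hp : ∀ s ∈ Ioo c d, p₂ s ≤ p₁ s) :
    MonotoneOn (r₂ - r₁) (Icc c d) :=
  monotoneOn_Icc_of_hasDerivAt_nonneg (B₂.continuousOn_r.sub B₁.continuousOn_r)
    (fun s hs => (B₂.hasDerivAt_r s hs).sub (B₁.hasDerivAt_r s hs)) fun s hs =>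
      sub_nonneg.2 (one_div_le_one_div_of_neg_of_le (B₁.p_neg s hs) (hp s hs))

lemma monotoneOn_phaseQ_sub_of_rp_le (hf : Continuous f) (hS : QRegularOn n f H (Icc c d))
    (B₁ : DecreasingBranch n f r₁ p₁ c d) (B₂ : DecreasingBranch n f r₂ p₂ c d)
    (hV : ∀ s ∈ Ioo c d, r₂ s * p₂ s ≤ r₁ s * p₁ s) :
    MonotoneOn (phaseQ f H r₂ p₂ - phaseQ f H r₁ p₁) (Icc c d) := by
  refine monotoneOn_Icc_of_hasDerivAt_nonneg
    ((B₂.continuousOn_phaseQ hf hS).sub (B₁.continuousOn_phaseQ hf hS))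
    (fun s hs => (B₂.hasDerivAt_phaseQ hf hS hs).sub (B₁.hasDerivAt_phaseQ hf hS hs))
    fun s hs => ?_
  rw [← sub_mul]
  refine mul_nonneg_of_nonpos_of_nonpos (sub_nonpos.2 (hV s hs)) ?_
  linarith [hS.le_deriv_ratio s (by rwa [interior_Icc])]

lemma phaseQ_lt_left (hf : Continuous f) (hS : QRegularOn n f H (Icc c d)) (hcd : c ≤ d)
    (B₁ : DecreasingBranch n f r₁ p₁ c d) (B₂ : DecreasingBranch n f r₂ p₂ c d)
    (hV : ∀ s ∈ Ioo c d, r₂ s * p₂ s ≤ r₁ s * p₁ s)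
    (hQ : phaseQ f H r₂ p₂ d < phaseQ f H r₁ p₁ d) :
    phaseQ f H r₂ p₂ c < phaseQ f H r₁ p₁ c := by
  have := B₁.monotoneOn_phaseQ_sub_of_rp_le hf hS B₂ hV (left_mem_Icc.2 hcd) (right_mem_Icc.2 hcd)
    hcd
  simp only [Pi.sub_apply] at this
  linarith

lemma Fint_mul_sq_sub_sq_pos {x : ℝ} (hV : r₁ x * p₁ x = r₂ x * p₂ x)
    (hQ : phaseQ f H r₂ p₂ x < phaseQ f H r₁ p₁ x) : 0 < Fint f x * (r₂ x ^ 2 - r₁ x ^ 2) := by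
  simp only [phaseQ, hV] at hQ
  linarith

lemma rp_lt_rp_of_f_pos (hf : Continuous f) (hS : QRegularOn n f H (Icc c d)) (hc : Fint f c = 0)
    (hpos : ∀ s ∈ Ioo c d, 0 < f s) (B₁ : DecreasingBranch n f r₁ p₁ c d)
    (B₂ : DecreasingBranch n f r₂ p₂ c d) (hV : r₂ d * p₂ d < r₁ d * p₁ d)
    (hQ : phaseQ f H r₂ p₂ d < phaseQ f H r₁ p₁ d) :
    ∀ s ∈ Icc c d, r₂ s * p₂ s < r₁ s * p₁ s := by
  have key : ∀ s ∈ Icc c d, 0 < r₁ s * p₁ s - r₂ s * p₂ s := by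
    refine pos_on_Icc_of_ne_zero_of_pos_on_Ioc (B₁.continuousOn_rp.sub B₂.continuousOn_rp)
      (sub_pos.2 hV) fun x hx hgt hx0 => ?_
    have hVx := sub_eq_zero.1 hx0
    have hFx := Fint_mul_sq_sub_sq_pos hVx <| phaseQ_lt_left hf
      (hS.mono (Icc_subset_Icc_left hx.1)) hx.2.le (B₁.mono hx.1 le_rfl) (B₂.mono hx.1 le_rfl)
      (fun s hs => (sub_pos.1 (hgt s ⟨hs.1, hs.2.le⟩)).le) hQ
    rcases hx.1.eq_or_lt with rfl | hcx
    · rw [hc, zero_mul] at hFx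
      exact hFx.false
    have hx' : x ∈ Ioo c d := ⟨hcx, hx.2⟩
    have hF : 0 ≤ Fint f x := by
      rw [← hc]
      exact monotoneOn_Icc_of_hasDerivAt_nonneg (continuous_Fint hf).continuousOn
        (fun s _ => hasDerivAt_Fint hf s) (fun s hs => (hpos s hs).le)
        (left_mem_Icc.2 (hcx.trans hx.2).le) (Ioo_subset_Icc_self hx') hcx.le
    have hr := pos_of_mul_pos_right hFx hF
    refine not_pos_on_Ioc_of_hasDerivAt_neg
      ((B₁.hasDerivAt_rp hx').sub (B₂.hasDerivAt_rp hx')) ?_ hx0 hx.2 hgt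
    rw [hVx]
    linarith [mul_neg_of_pos_of_neg hr (div_neg_of_pos_of_neg (hpos x hx') (B₂.rp_neg hx'))]
  exact fun s hs => sub_pos.1 (key s hs)

lemma rp_lt_rp_of_r_le (hf : Continuous f) (hS : QRegularOn n f H (Icc c d))
    (hF : ∀ s ∈ Icc c d, 0 ≤ Fint f s) (B₁ : DecreasingBranch n f r₁ p₁ c d)
    (B₂ : DecreasingBranch n f r₂ p₂ c d) (hr : r₂ d ≤ r₁ d)
    (hV : r₂ d * p₂ d < r₁ d * p₁ d) (hQ : phaseQ f H r₂ p₂ d < phaseQ f H r₁ p₁ d) :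
    ∀ s ∈ Icc c d, r₂ s * p₂ s < r₁ s * p₁ s := by
  have key : ∀ s ∈ Icc c d, 0 < r₁ s * p₁ s - r₂ s * p₂ s := by
    refine pos_on_Icc_of_ne_zero_of_pos_on_Ioc (B₁.continuousOn_rp.sub B₂.continuousOn_rp)
      (sub_pos.2 hV) fun x hx hgt hx0 => ?_
    have hVle : ∀ s ∈ Ioo x d, r₂ s * p₂ s ≤ r₁ s * p₁ s := fun s hs =>
      (sub_pos.1 (hgt s ⟨hs.1, hs.2.le⟩)).le
    have hx' := Ico_subset_Icc_self hx
    have hd := B₁.r_pos_of_rp_lt B₂ (right_mem_Icc.2 (hx.1.trans hx.2.le)) hr hV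
    have hQx := phaseQ_lt_left hf (hS.mono (Icc_subset_Icc_left hx.1)) hx.2.le
      (B₁.mono hx.1 le_rfl) (B₂.mono hx.1 le_rfl) hVle hQ
    have hrx := (B₁.mono hx.1 le_rfl).r_le_of_rp_le (B₂.mono hx.1 le_rfl) hVle hd hr x
      (left_mem_Icc.2 hx.2.le)
    have hsq := pow_le_pow_left₀ (B₂.r_nonneg x hx') hrx 2
    exact (Fint_mul_sq_sub_sq_pos (sub_eq_zero.1 hx0) hQx).not_ge
      (mul_nonpos_of_nonneg_of_nonpos (hF x hx') (sub_nonpos.2 hsq))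
  exact fun s hs => sub_pos.1 (key s hs)

lemma sqrt_div_sub_le {N P₁ P₂ G : ℝ} (hN : 1 ≤ N) (hG : G ≤ 0) (h₁ : P₁ < 0) (h₂ : P₂ < P₁)
    (hE : 0 < P₁ ^ 2 + G) :
    √(P₂ ^ 2 + G) / P₂ - (N - 1) * (P₂ / √(P₂ ^ 2 + G)) ≤
      √(P₁ ^ 2 + G) / P₁ - (N - 1) * (P₁ / √(P₁ ^ 2 + G)) := by
  have hE₂ : 0 < P₂ ^ 2 + G := by nlinarith
  have hS₁ := Real.sqrt_pos.2 hE
  have hS₂ := Real.sqrt_pos.2 hE₂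
  have hcross : √(P₁ ^ 2 + G) * (-P₂) ≤ √(P₂ ^ 2 + G) * (-P₁) := by
    refine (sq_le_sq₀ (mul_nonneg hS₁.le (by linarith)) (mul_nonneg hS₂.le (by linarith))).1 ?_
    rw [mul_pow, mul_pow, Real.sq_sqrt hE.le, Real.sq_sqrt hE₂.le]
    have : P₁ ^ 2 ≤ P₂ ^ 2 := by nlinarith
    linarith [mul_le_mul_of_nonpos_left this hG]
  have hleft : √(P₂ ^ 2 + G) / P₂ ≤ √(P₁ ^ 2 + G) / P₁ := by
    rw [← neg_le_neg_iff, ← div_neg, ← div_neg, div_le_div_iff₀ (by linarith) (by linarith)]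
    exact hcross
  have hright : P₁ / √(P₁ ^ 2 + G) ≤ P₂ / √(P₂ ^ 2 + G) := by
    rw [div_le_div_iff₀ hS₁ hS₂]
    linarith
  linarith [mul_le_mul_of_nonneg_left hright (sub_nonneg.2 hN)]

lemma monotoneOn_phaseW_sub_of_p_lt (hn : 1 ≤ n) (hf : Continuous f)
    (hF : ∀ s ∈ Ioo c d, Fint f s ≤ 0) (B₁ : DecreasingBranch n f r₁ p₁ c d)
    (B₂ : DecreasingBranch n f r₂ p₂ c d) (hE : ∀ s ∈ Ioo c d, 0 < phaseEnergy f p₁ s)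
    (hp : ∀ s ∈ Ioo c d, p₂ s < p₁ s) :
    MonotoneOn (phaseW f r₁ p₁ - phaseW f r₂ p₂) (Icc c d) := by
  have hE₂ : ∀ s ∈ Ioo c d, 0 < phaseEnergy f p₂ s := fun s hs => by
    have := hE s hs
    have := pow_lt_pow_left₀ (neg_lt_neg (hp s hs)) (neg_pos.2 (B₁.p_neg s hs)).le two_ne_zero
    simp only [phaseEnergy, neg_sq] at *
    linarith
  refine monotoneOn_Icc_of_hasDerivAt_nonneg
    ((B₁.continuousOn_phaseW hf).sub (B₂.continuousOn_phaseW hf))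
    (fun s hs => (B₁.hasDerivAt_phaseW hf hs (hE s hs)).sub
      (B₂.hasDerivAt_phaseW hf hs (hE₂ s hs))) fun s hs => sub_nonneg.2 ?_
  exact sqrt_div_sub_le (by exact_mod_cast hn) (by linarith [hF s hs]) (B₁.p_neg s hs) (hp s hs)
    (hE s hs)

lemma phaseW_lt_of_rp_lt {x : ℝ} (hF : Fint f x ≤ 0) (hE : 0 < phaseEnergy f p₁ x)
    (hp : p₂ x < p₁ x) (hp₁ : p₁ x ≤ 0) (hr₂ : 0 ≤ r₂ x) (hr : r₂ x ≤ r₁ x)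
    (hV : r₂ x * p₂ x < r₁ x * p₁ x) : phaseW f r₁ p₁ x < phaseW f r₂ p₂ x := by
  have hE₂ : 0 ≤ phaseEnergy f p₂ x := by
    simp only [phaseEnergy] at *
    nlinarith
  refine lt_of_pow_lt_pow_left₀ 2 (mul_nonneg hr₂ (Real.sqrt_nonneg _)) ?_
  simp only [phaseW, mul_pow, Real.sq_sqrt hE.le, Real.sq_sqrt hE₂]
  simp only [phaseEnergy]
  have hVneg : r₁ x * p₁ x ≤ 0 := mul_nonpos_of_nonneg_of_nonpos (hr₂.trans hr) hp₁
  have hVsq : (r₁ x * p₁ x) ^ 2 < (r₂ x * p₂ x) ^ 2 := by nlinarith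
  nlinarith [mul_le_mul_of_nonpos_right (pow_le_pow_left₀ hr₂ hr 2) hF]

lemma p_lt_of_phaseW_lt {x : ℝ} (hE : 0 < phaseEnergy f p₁ x) (hp₂ : p₂ x ≤ 0) (hr₂ : 0 ≤ r₂ x)
    (hr : r₂ x ≤ r₁ x) (hW : phaseW f r₁ p₁ x < phaseW f r₂ p₂ x) : p₂ x < p₁ x := by
  have hsqrt : √(phaseEnergy f p₁ x) < √(phaseEnergy f p₂ x) :=
    lt_of_mul_lt_mul_left ((mul_le_mul_of_nonneg_right hr (Real.sqrt_nonneg _)).trans_lt hW) hr₂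
  have := (Real.sqrt_lt_sqrt_iff hE.le).1 hsqrt
  simp only [phaseEnergy] at this
  nlinarith

lemma p_lt_on_Icc_of_Fint_nonpos (hn : 1 ≤ n) (hf : Continuous f)
    (hF : ∀ s ∈ Icc c d, Fint f s ≤ 0) (B₁ : DecreasingBranch n f r₁ p₁ c d)
    (B₂ : DecreasingBranch n f r₂ p₂ c d) (hE : ∀ s ∈ Icc c d, 0 < phaseEnergy f p₁ s)
    (hr : r₂ d ≤ r₁ d) (hp : p₂ d < p₁ d) (hW : phaseW f r₁ p₁ d < phaseW f r₂ p₂ d) :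
    ∀ s ∈ Icc c d, r₂ s ≤ r₁ s ∧ p₂ s < p₁ s ∧ phaseW f r₁ p₁ s < phaseW f r₂ p₂ s := by
  have step : ∀ x ∈ Icc c d, (∀ s ∈ Ioo x d, p₂ s < p₁ s) →
      r₂ x ≤ r₁ x ∧ p₂ x < p₁ x ∧ phaseW f r₁ p₁ x < phaseW f r₂ p₂ x := by
    intro x hx hpx
    have hsub : Ioo x d ⊆ Icc c d := Ioo_subset_Icc_self.trans (Icc_subset_Icc_left hx.1)
    have hxd := left_mem_Icc.2 hx.2
    have hdx := right_mem_Icc.2 hx.2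
    have hr' := (B₁.mono hx.1 le_rfl).monotoneOn_r_sub_of_p_le (B₂.mono hx.1 le_rfl)
      (fun s hs => (hpx s hs).le) hxd hdx hx.2
    have hW' := (B₁.mono hx.1 le_rfl).monotoneOn_phaseW_sub_of_p_lt hn hf
      (fun s hs => hF s (hsub hs)) (B₂.mono hx.1 le_rfl) (fun s hs => hE s (hsub hs)) hpx
      hxd hdx hx.2
    simp only [Pi.sub_apply] at hr' hW'
    have hrx : r₂ x ≤ r₁ x := by linarith
    have hWx : phaseW f r₁ p₁ x < phaseW f r₂ p₂ x := by linarith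
    exact ⟨hrx, p_lt_of_phaseW_lt (hE x hx) (B₂.p_nonpos x hx) (B₂.r_nonneg x hx) hrx hWx, hWx⟩
  have hpos : ∀ s ∈ Icc c d, 0 < p₁ s - p₂ s :=
    pos_on_Icc_of_ne_zero_of_pos_on_Ioc (B₁.continuousOn_p.sub B₂.continuousOn_p) (sub_pos.2 hp)
      fun x hx hgt => (sub_pos.2 (step x (Ico_subset_Icc_self hx)
        fun s hs => sub_pos.1 (hgt s (Ioo_subset_Ioc_self hs))).2.1).ne'
  exact fun s hs => step s hs fun t ht =>
    sub_pos.1 (hpos t ⟨hs.1.trans ht.1.le, ht.2.le⟩)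

lemma r_le_and_rp_lt_left_of_Fint_nonpos (hn : 1 ≤ n) (hf : Continuous f) (hcd : c ≤ d)
    (hF : ∀ s ∈ Icc c d, Fint f s ≤ 0) (hFc : Fint f c = 0)
    (B₁ : DecreasingBranch n f r₁ p₁ c d) (B₂ : DecreasingBranch n f r₂ p₂ c d)
    (hE : 0 < phaseEnergy f p₁ c) (hr : r₂ d ≤ r₁ d) (hV : r₂ d * p₂ d < r₁ d * p₁ d) :
    r₂ c ≤ r₁ c ∧ r₂ c * p₂ c < r₁ c * p₁ c := by
  have hc := left_mem_Icc.2 hcd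
  have hd := right_mem_Icc.2 hcd
  have hE' : ∀ s ∈ Icc c d, 0 < phaseEnergy f p₁ s := fun s hs =>
    hE.trans_le (B₁.monotoneOn_phaseEnergy hn hf hc hs hs.1)
  have hp : p₂ d < p₁ d := by
    by_contra! hle
    have := mul_le_mul_of_nonpos_right hr (B₁.p_nonpos d hd)
    nlinarith [mul_le_mul_of_nonneg_left hle (B₂.r_nonneg d hd)]
  have hW := phaseW_lt_of_rp_lt (hF d hd) (hE' d hd) hp (B₁.p_nonpos d hd) (B₂.r_nonneg d hd) hr hV
  obtain ⟨hrc, -, hWc⟩ := B₁.p_lt_on_Icc_of_Fint_nonpos hn hf hF B₂ hE' hr hp hW c hc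
  refine ⟨hrc, ?_⟩
  simp only [phaseW, phaseEnergy, hFc, mul_zero, add_zero, Real.sqrt_sq_eq_abs,
    abs_of_nonpos (B₁.p_nonpos c hc), abs_of_nonpos (B₂.p_nonpos c hc)] at hWc
  linarith

/- Otherwise `p₁ ≤ p₂` would persist to the right of the meeting point: by the backward Grönwall
inequality, `p₂ < p₁` at some `y > c` is inherited by `c`. -/
lemma p_lt_left_of_r_lt (hn : 1 ≤ n) (hf : Continuous f) (hcd : c < d)
    (B₁ : DecreasingBranch n f r₁ p₁ c d) (B₂ : DecreasingBranch n f r₂ p₂ c d) (hp₁ : p₁ c < 0)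
    (hp₂ : p₂ c < 0) (hc : r₁ c = r₂ c) (hr : ∀ s ∈ Ioc c d, r₁ s < r₂ s) : p₂ c < p₁ c := by
  obtain ⟨y, hy, hpy⟩ : ∃ y ∈ Ioo c d, p₂ y < p₁ y := by
    by_contra! hle
    have := B₂.monotoneOn_r_sub_of_p_le B₁ hle (left_mem_Icc.2 hcd.le) (right_mem_Icc.2 hcd.le)
      hcd.le
    simp only [Pi.sub_apply] at this
    linarith [hr d (right_mem_Ioc.2 hcd)]
  have hsub : Icc c y ⊆ Icc c d := Icc_subset_Icc_right hy.2.le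
  have hneg : ∀ s ∈ Icc c y, p₁ s < 0 ∧ p₂ s < 0 := fun s hs => by
    rcases hs.1.eq_or_lt with rfl | hcs
    · exact ⟨hp₁, hp₂⟩
    · have hs' : s ∈ Ioo c d := ⟨hcs, hs.2.trans_lt hy.2⟩
      exact ⟨B₁.p_neg s hs', B₂.p_neg s hs'⟩
  have hcont : ContinuousOn (fun s => f s / (p₁ s * p₂ s)) (Icc c y) :=
    hf.continuousOn.div ((B₁.continuousOn_p.mono hsub).mul (B₂.continuousOn_p.mono hsub))
      fun s hs => mul_ne_zero (hneg s hs).1.ne (hneg s hs).2.ne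
  obtain ⟨K, hK⟩ := (isCompact_Icc.image_of_continuousOn hcont).bddAbove
  refine sub_pos.1 <| pos_on_Icc_of_hasDerivAt_le_mul (K := K) (g := p₁ - p₂)
    ((B₁.continuousOn_p.sub B₂.continuousOn_p).mono hsub) (sub_pos.2 hpy)
    (fun s hs => (B₁.hasDerivAt_p s ⟨hs.1, hs.2.trans hy.2⟩).sub
      (B₂.hasDerivAt_p s ⟨hs.1, hs.2.trans hy.2⟩)) (fun s hs hD => ?_) c (left_mem_Icc.2 hy.1.le)
  have hs' : s ∈ Ioo c d := ⟨hs.1, hs.2.trans hy.2⟩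
  obtain ⟨hp₁s, hp₂s⟩ := hneg s (Ioo_subset_Icc_self hs)
  have hinv : ((n : ℝ) - 1) / r₂ s ≤ ((n : ℝ) - 1) / r₁ s :=
    div_le_div_of_nonneg_left (by simpa using hn) (B₁.r_pos s (Ioo_subset_Ico_self hs'))
      (hr s (Ioo_subset_Ioc_self hs')).le
  have hfrac : f s / p₂ s - f s / p₁ s = f s / (p₁ s * p₂ s) * (p₁ - p₂) s := by
    simp only [Pi.sub_apply]
    field_simp [hp₁s.ne, hp₂s.ne]
  rw [neg_div, neg_div]
  linarith [mul_le_mul_of_nonneg_right (hK ⟨s, Ioo_subset_Icc_self hs, rfl⟩) hD.le]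

lemma phaseQ_lt_of_rp_lt {x : ℝ} (hq : Fint f x / f x ≤ 0)
    (hr : Fint f x * r₂ x ^ 2 = Fint f x * r₁ x ^ 2) (hV₁ : r₁ x * p₁ x ≤ 0)
    (hV : r₂ x * p₂ x < r₁ x * p₁ x) : phaseQ f H r₂ p₂ x < phaseQ f H r₁ p₁ x := by
  have hVsq : (r₁ x * p₁ x) ^ 2 < (r₂ x * p₂ x) ^ 2 := by nlinarith
  simp only [phaseQ]
  linarith [mul_le_mul_of_nonpos_left hV.le hq]

lemma min_and_phaseQ_lt_of_below {m₁ m₂ : ℝ} (hf : Continuous f)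
    (hS : QRegularOn n f H (Iic d)) (hF : ∀ s ≤ d, 0 ≤ Fint f s) (hd₁ : m₁ < d) (hd₂ : m₂ < d)
    (B₁ : DecreasingBranch n f r₁ p₁ m₁ d) (B₂ : DecreasingBranch n f r₂ p₂ m₂ d)
    (hp₂ : p₂ m₂ = 0) (hr : r₂ d ≤ r₁ d) (hV : r₂ d * p₂ d < r₁ d * p₁ d)
    (hQ : phaseQ f H r₂ p₂ d < phaseQ f H r₁ p₁ d) :
    m₂ < m₁ ∧ phaseQ f H r₂ p₂ m₂ < phaseQ f H r₁ p₁ m₁ := by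
  have hlt := (B₁.mono (le_max_left m₁ m₂) le_rfl).rp_lt_rp_of_r_le hf
    (hS.mono Icc_subset_Iic_self) (fun s hs => hF s hs.2) (B₂.mono (le_max_right m₁ m₂) le_rfl)
    hr hV hQ
  have hm : m₂ < m₁ := by
    by_contra! hle
    have hVm := hlt m₂ ⟨max_le hle le_rfl, hd₂.le⟩
    rw [hp₂, mul_zero] at hVm
    exact hVm.not_ge (B₁.rp_nonpos ⟨hle, hd₂.le⟩)
  refine ⟨hm, ?_⟩
  calc phaseQ f H r₂ p₂ m₂ ≤ phaseQ f H r₂ p₂ m₁ :=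
        B₂.monotoneOn_phaseQ hf (hS.mono Icc_subset_Iic_self) (left_mem_Icc.2 hd₂.le)
          ⟨hm.le, hd₁.le⟩ hm.le
    _ < phaseQ f H r₁ p₁ m₁ :=
        phaseQ_lt_left hf (hS.mono Icc_subset_Iic_self) hd₁.le B₁ (B₂.mono hm.le le_rfl)
          (fun s hs => (hlt s ⟨max_le hs.1.le (hm.trans hs.1).le, hs.2.le⟩).le) hQ

end TwoBranches

section Comparison

variable {n : ℕ} {f H r₁ p₁ r₂ p₂ : ℝ → ℝ} {b β c d m₁ m₂ M₁ M₂ : ℝ}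

lemma exists_transversal_meeting (hn : 1 ≤ n) (hf : Continuous f) (hcd : c < d)
    (B₁ : DecreasingBranch n f r₁ p₁ c d) (B₂ : DecreasingBranch n f r₂ p₂ c d) (hp₁ : p₁ c < 0)
    (hp₂ : p₂ c < 0) (hc : r₁ c = r₂ c) (hd : r₁ d < r₂ d) :
    ∃ x ∈ Ico c d, r₁ x = r₂ x ∧ p₂ x < p₁ x := by
  obtain ⟨x, hx, hx0, hpos⟩ := exists_last_zero hcd.le
    (B₂.continuousOn_r.sub B₁.continuousOn_r) (sub_nonpos.2 hc.ge) (sub_pos.2 hd)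
  have hneg : p₁ x < 0 ∧ p₂ x < 0 := by
    rcases hx.1.eq_or_lt with rfl | hcx
    · exact ⟨hp₁, hp₂⟩
    · exact ⟨B₁.p_neg x ⟨hcx, hx.2⟩, B₂.p_neg x ⟨hcx, hx.2⟩⟩
  have hrx : r₁ x = r₂ x := (sub_eq_zero.1 hx0).symm
  exact ⟨x, hx, hrx, (B₁.mono hx.1 le_rfl).p_lt_left_of_r_lt hn hf hx.2 (B₂.mono hx.1 le_rfl)
    hneg.1 hneg.2 hrx fun s hs => sub_pos.1 (hpos s hs)⟩

lemma min_and_phaseQ_lt_of_between (hn : 1 ≤ n) (hf : Continuous f) (h1 : Hf1 f b β)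
    (hS : QRegularOn n f H (Iic (-β))) (hm₁ : m₁ < -β) (hm₂ : m₂ < -β) (hd : d ∈ Icc (-β) β)
    (B₁ : DecreasingBranch n f r₁ p₁ m₁ d) (B₂ : DecreasingBranch n f r₂ p₂ m₂ d)
    (hp₂ : p₂ m₂ = 0) (hr : r₂ d ≤ r₁ d) (hV : r₂ d * p₂ d < r₁ d * p₁ d) :
    m₂ < m₁ ∧ phaseQ f H r₂ p₂ m₂ < phaseQ f H r₁ p₁ m₁ := by
  have hβ₁ : -β ∈ Icc m₁ d := ⟨hm₁.le, hd.1⟩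
  have hE : 0 < phaseEnergy f p₁ (-β) := by
    have hF := h1.Fint_pos hf (lt_abs.2 (.inr (lt_neg.2 hm₁)))
    refine lt_of_lt_of_le ?_ (B₁.monotoneOn_phaseEnergy hn hf
      (left_mem_Icc.2 (hm₁.le.trans hd.1)) hβ₁ hm₁.le)
    exact add_pos_of_nonneg_of_pos (sq_nonneg _) (mul_pos two_pos hF)
  obtain ⟨hr', hV'⟩ := (B₁.mono hm₁.le le_rfl).r_le_and_rp_lt_left_of_Fint_nonpos hn hf hd.1
    (fun s hs => h1.Fint_nonpos hf (abs_le.2 ⟨hs.1, hs.2.trans hd.2⟩)) h1.Fint_neg_β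
    (B₂.mono hm₂.le le_rfl) hE hr hV
  exact (B₁.mono le_rfl hd.1).min_and_phaseQ_lt_of_below hf hS (fun s => h1.Fint_nonneg_of_le hf)
    hm₁ hm₂ (B₂.mono le_rfl hd.1) hp₂ hr' hV' <|
    phaseQ_lt_of_rp_lt (by simp [h1.Fint_neg_β]) (by simp [h1.Fint_neg_β]) (B₁.rp_nonpos hβ₁) hV'

lemma min_and_phaseQ_lt_of_meeting (hn : 1 ≤ n) (hf : Continuous f) (h1 : Hf1 f b β)
    (hS : QRegularOn n f H (Iic (-β))) (hm₁ : m₁ < -β) (hm₂ : m₂ < -β) (hd₁ : m₁ < d)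
    (hd₂ : m₂ < d) (hd : d ≤ β) (B₁ : DecreasingBranch n f r₁ p₁ m₁ d)
    (B₂ : DecreasingBranch n f r₂ p₂ m₂ d) (hp₂ : p₂ m₂ = 0) (hr : r₁ d = r₂ d)
    (hr₂ : 0 < r₂ d) (hp : p₂ d < p₁ d) :
    m₂ < m₁ ∧ phaseQ f H r₂ p₂ m₂ < phaseQ f H r₁ p₁ m₁ := by
  have hV : r₂ d * p₂ d < r₁ d * p₁ d := by rw [hr]; exact mul_lt_mul_of_pos_left hp hr₂
  rcases le_total (-β) d with hβd | hdβ
  · exact B₁.min_and_phaseQ_lt_of_between hn hf h1 hS hm₁ hm₂ ⟨hβd, hd⟩ B₂ hp₂ hr.ge hV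
  · refine B₁.min_and_phaseQ_lt_of_below hf (hS.mono (Iic_subset_Iic.2 hdβ))
      (fun s hs => h1.Fint_nonneg_of_le hf (hs.trans hdβ)) hd₁ hd₂ B₂ hp₂ hr.ge hV ?_
    exact phaseQ_lt_of_rp_lt
      (div_nonpos_of_nonneg_of_nonpos (h1.Fint_nonneg_of_le hf hdβ) (h1.neg hdβ).le)
      (by rw [hr]) (B₁.rp_nonpos (right_mem_Icc.2 hd₁.le)) hV

theorem min_and_phaseQ_lt (hn : 1 ≤ n) (hf : Continuous f) (h1 : Hf1 f b β)
    (hS : QRegularOn n f H (Ici β)) (hS' : QRegularOn n f H (Iic (-β)))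
    (hm₁ : m₁ < -β) (hm₂ : m₂ < -β) (hM₁ : β < M₁) (hM : M₁ < M₂)
    (B₁ : DecreasingBranch n f r₁ p₁ m₁ M₁) (B₂ : DecreasingBranch n f r₂ p₂ m₂ M₂)
    (hp₁ : p₁ M₁ = 0) (hp₂ : p₂ m₂ = 0) (hQ : phaseQ f H r₂ p₂ M₂ < phaseQ f H r₁ p₁ M₁)
    (hc₁ : c ∈ Ioo m₁ M₁) (hc₂ : c ∈ Ioo m₂ M₂) (hc : r₁ c = r₂ c) :
    m₂ < m₁ ∧ phaseQ f H r₂ p₂ m₂ < phaseQ f H r₁ p₁ m₁ := by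
  have hβ := h1.β_pos
  have hm₁β : m₁ < β := by linarith
  have hm₂β : m₂ < β := by linarith
  have hQ' : phaseQ f H r₂ p₂ M₁ < phaseQ f H r₁ p₁ M₁ :=
    ((B₂.mono hm₂β.le le_rfl).monotoneOn_phaseQ hf (hS.mono Icc_subset_Ici_self)
      ⟨hM₁.le, hM.le⟩ ⟨(hM₁.trans hM).le, le_rfl⟩ hM.le).trans_lt hQ
  have hV : ∀ s ∈ Icc β M₁, r₂ s * p₂ s < r₁ s * p₁ s :=
    (B₁.mono hm₁β.le le_rfl).rp_lt_rp_of_f_pos hf (hS.mono Icc_subset_Ici_self) h1.Fint_β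
      (fun s hs => h1.pos hs.1.le) (B₂.mono hm₂β.le hM.le)
      (by rw [hp₁, mul_zero]; exact B₂.rp_neg ⟨hm₂β.trans hM₁, hM⟩) hQ'
  by_cases hrβ : r₂ β ≤ r₁ β
  · exact (B₁.mono le_rfl hM₁.le).min_and_phaseQ_lt_of_between hn hf h1 hS' hm₁ hm₂
      ⟨by linarith, le_rfl⟩ (B₂.mono le_rfl (hM₁.trans hM).le) hp₂ hrβ (hV β ⟨le_rfl, hM₁.le⟩)
  have hcβ : c < β := by
    by_contra! hβc
    exact hrβ ((B₁.mono hm₁β.le hc₁.2.le).r_le_of_rp_le (B₂.mono hm₂β.le hc₂.2.le)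
      (fun s hs => (hV s ⟨hs.1.le, (hs.2.trans hc₁.2).le⟩).le)
      (B₁.r_pos c (Ioo_subset_Ico_self hc₁)) hc.ge β (left_mem_Icc.2 hβc))
  obtain ⟨x, hx, hrx, hpx⟩ := (B₁.mono hc₁.1.le hM₁.le).exists_transversal_meeting hn hf hcβ
    (B₂.mono hc₂.1.le (hM₁.trans hM).le) (B₁.p_neg c hc₁) (B₂.p_neg c hc₂) hc (not_le.1 hrβ)
  have hx₁ : m₁ < x := hc₁.1.trans_le hx.1
  have hx₂ : m₂ < x := hc₂.1.trans_le hx.1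
  have hxM : x < M₁ := hx.2.trans hM₁
  exact (B₁.mono le_rfl hxM.le).min_and_phaseQ_lt_of_meeting hn hf h1 hS' hm₁ hm₂ hx₁ hx₂ hx.2.le
    (B₂.mono le_rfl (hxM.trans hM).le) hp₂ hrx (B₂.r_pos x ⟨hx₂.le, hxM.trans hM⟩) hpx

end Comparison

end DecreasingBranch

/-! ### Radial solutions -/

/-- `v` solves the radial equation `v'' + (n-1)/r v' + f(v) = 0` on `(0,∞)`, is `C¹` up to `0` and
satisfies `v' 0 = 0`; unlike in `IVPsol`, the value at `0` is not prescribed. -/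
structure RadialSol (n : ℕ) (f v : ℝ → ℝ) : Prop where
  continuousOn : ContinuousOn v (Ici 0)
  continuousOn_deriv : ContinuousOn (deriv v) (Ici 0)
  deriv_zero : deriv v 0 = 0
  differentiableAt : ∀ r, 0 < r → DifferentiableAt ℝ v r
  hasDerivAt_deriv : ∀ r, 0 < r →
    HasDerivAt (deriv v) (-((n : ℝ) - 1) / r * deriv v r - f (v r)) r

/-- The energy `v'² + 2 F(v)` of a radial solution. -/
noncomputable def energy (f v : ℝ → ℝ) (r : ℝ) : ℝ := deriv v r ^ 2 + 2 * Fint f (v r)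

lemma Hf1.lt_abs_of_energy_pos {f v : ℝ → ℝ} {b β r : ℝ} (hf : Continuous f) (h1 : Hf1 f b β)
    (hv : deriv v r = 0) (hE : 0 < energy f v r) : β < |v r| := by
  by_contra! hle
  have := h1.Fint_nonpos hf hle
  rw [energy, hv] at hE
  linarith

lemma Hf1.energy_pos {f v : ℝ → ℝ} {b β r : ℝ} (hf : Continuous f) (h1 : Hf1 f b β)
    (hv : β < |v r|) : 0 < energy f v r :=
  add_pos_of_nonneg_of_pos (sq_nonneg _) (mul_pos two_pos (h1.Fint_pos hf hv))

lemma Family.radialSol {n : ℕ} {f : ℝ → ℝ} {u : ℝ → ℝ → ℝ} {α : ℝ} (hu : Family n f u)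
    (hα : 0 < α) : RadialSol n f (u α) := by
  obtain ⟨-, h0, hc, hd, hE⟩ := hu.1 α hα
  refine ⟨hc, ?_, h0, fun r hr => (hd r hr).1, fun r hr => ?_⟩
  · exact hu.2.2.comp (f := fun r : ℝ => (α, r)) (by fun_prop) fun r hr => ⟨hα, hr⟩
  · refine (hd r hr).2.hasDerivAt.congr_deriv ?_
    rw [neg_div, neg_mul]
    linarith [hE r hr]

lemma energy_neg {f : ℝ → ℝ} (hodd : ∀ s, f (-s) = -f s) (v : ℝ → ℝ) :
    energy f (-v) = energy f v := by
  ext r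
  simp only [energy, deriv.neg', Pi.neg_apply, neg_sq, Fint_neg hodd]

namespace RadialSol

variable {n : ℕ} {f v : ℝ → ℝ} {b β c d r T : ℝ}

lemma neg (hodd : ∀ s, f (-s) = -f s) (h : RadialSol n f v) : RadialSol n f (-v) where
  continuousOn := h.continuousOn.neg
  continuousOn_deriv := by rw [deriv.neg']; exact h.continuousOn_deriv.neg
  deriv_zero := by simp only [deriv.neg', h.deriv_zero, neg_zero]
  differentiableAt r hr := (h.differentiableAt r hr).neg
  hasDerivAt_deriv r hr := by
    rw [deriv.neg']
    refine (h.hasDerivAt_deriv r hr).neg.congr_deriv ?_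
    rw [Pi.neg_apply, hodd]
    ring

lemma neg_one_pow_mul (hodd : ∀ s, f (-s) = -f s) (h : RadialSol n f v) (j : ℕ) :
    RadialSol n f (fun r => (-1) ^ j * v r) := by
  rcases neg_one_pow_eq_or ℝ j with hj | hj
  · simpa only [hj, one_mul] using h
  · simp only [hj, neg_one_mul]
    exact h.neg hodd

lemma continuousOn_energy (hf : Continuous f) (h : RadialSol n f v) :
    ContinuousOn (energy f v) (Ici 0) :=
  (h.continuousOn_deriv.pow 2).add
    (continuousOn_const.mul ((continuous_Fint hf).comp_continuousOn h.continuousOn))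

lemma hasDerivAt_energy (hf : Continuous f) (h : RadialSol n f v) (hr : 0 < r) :
    HasDerivAt (energy f v) (-(2 * ((n : ℝ) - 1) / r * deriv v r ^ 2)) r := by
  refine HasDerivAt.congr_deriv (f := energy f v) (((h.hasDerivAt_deriv r hr).pow 2).add
    (((hasDerivAt_Fint hf (v r)).comp r (h.differentiableAt r hr).hasDerivAt).const_mul 2)) ?_
  field_simp
  ring

lemma antitoneOn_energy (hn : 1 ≤ n) (hf : Continuous f) (h : RadialSol n f v) :
    AntitoneOn (energy f v) (Ici 0) := by
  refine antitoneOn_of_deriv_nonpos (convex_Ici 0) (h.continuousOn_energy hf) (fun r hr => ?_)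
    fun r hr => ?_ <;> rw [interior_Ici] at hr
  · exact (h.hasDerivAt_energy hf hr).differentiableAt.differentiableWithinAt
  · have hn1 : (0 : ℝ) ≤ n - 1 := by simpa using hn
    rw [(h.hasDerivAt_energy hf hr).deriv, neg_nonpos]
    exact mul_nonneg (div_nonneg (by linarith) (le_of_lt hr)) (sq_nonneg _)

lemma energy_lt (hn : 2 ≤ n) (hf : Continuous f) (h : RadialSol n f v) (hc : 0 ≤ c) (hcd : c < d)
    (hv : ∀ r ∈ Ioo c d, deriv v r ≠ 0) : energy f v d < energy f v c := by
  refine strictAntiOn_of_deriv_neg (convex_Icc c d)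
    ((h.continuousOn_energy hf).mono fun r hr => hc.trans hr.1) (fun r hr => ?_)
    (left_mem_Icc.2 hcd.le) (right_mem_Icc.2 hcd.le) hcd
  rw [interior_Icc] at hr
  have hr0 : 0 < r := hc.trans_lt hr.1
  have hn1 : (0 : ℝ) < n - 1 := sub_pos.2 (Nat.one_lt_cast.2 hn)
  have := hv r hr
  rw [(h.hasDerivAt_energy hf hr0).deriv, neg_lt_zero]
  positivity

lemma deriv_pos_of_lt_neg (hn : 1 ≤ n) (h1 : Hf1 f b β) (h : RadialSol n f v) (hc : 0 ≤ c)
    (hcd : c < d) (hvc : deriv v c = 0) (hv : ∀ r ∈ Ioo c d, v r < -β) : 0 < deriv v d := by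
  obtain ⟨k, rfl⟩ : ∃ k, n = k + 1 := Nat.exists_eq_add_of_le' hn
  have hmono : StrictMonoOn (fun r => r ^ k * deriv v r) (Icc c d) := by
    refine strictMonoOn_Icc_of_hasDerivAt_pos (g' := fun r => -(r ^ k * f (v r)))
      ((continuous_pow k).continuousOn.mul (h.continuousOn_deriv.mono fun r hr => hc.trans hr.1))
      (fun r hr => ?_) fun r hr => ?_ <;> have hr0 : 0 < r := hc.trans_lt hr.1
    · refine ((hasDerivAt_pow k r).mul (h.hasDerivAt_deriv r hr0)).congr_deriv ?_
      cases k
      · simp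
      · simp only [Nat.cast_add, Nat.cast_one, Nat.add_sub_cancel, pow_succ]
        field_simp
        ring
    · exact neg_pos.2 (mul_neg_of_pos_of_neg (pow_pos hr0 k) (h1.neg (hv r hr).le))
  have := hmono (left_mem_Icc.2 hcd.le) (right_mem_Icc.2 hcd.le) hcd
  simp only [hvc, mul_zero] at this
  exact pos_of_mul_pos_right this (pow_nonneg (hc.trans hcd.le) k)

lemma strictMonoOn (h : RadialSol n f v) (hc : 0 ≤ c) (hv : ∀ r ∈ Ioo c d, 0 < deriv v r) :
    StrictMonoOn v (Icc c d) :=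
  strictMonoOn_of_deriv_pos (convex_Icc c d) (h.continuousOn.mono fun _ hr => hc.trans hr.1)
    (by rwa [interior_Icc])

lemma strictAntiOn (h : RadialSol n f v) (hc : 0 ≤ c) (hv : ∀ r ∈ Ioo c d, deriv v r < 0) :
    StrictAntiOn v (Icc c d) :=
  strictAntiOn_of_deriv_neg (convex_Icc c d) (h.continuousOn.mono fun _ hr => hc.trans hr.1)
    (by rwa [interior_Icc])

end RadialSol

/-- A solution is at rest below the level `-β` at the radius `T`. -/
def RestsBelow (v : ℝ → ℝ) (β T : ℝ) : Prop := deriv v T = 0 ∧ v T < -β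

/-- The radii up to which `v` is negative and increasing after `T`. -/
def riseSet (v : ℝ → ℝ) (T : ℝ) : Set ℝ := {r | T < r ∧ ∀ s ∈ Ioo T r, v s < 0 ∧ 0 < deriv v s}

/-- The end of the negative increasing piece of `v` following `T`: this is `Z_k` in terms of
`T = T_{k-1}`, for `v = (-1)^k u`. -/
noncomputable def riseEnd (v : ℝ → ℝ) (T : ℝ) : ℝ := sSup (riseSet v T)

/-- The first critical point of `v` after `riseEnd v T`: this is `T_k` in terms of `T = T_{k-1}`,
for `v = (-1)^k u`. -/
noncomputable def nextCritical (v : ℝ → ℝ) (T : ℝ) : ℝ :=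
  sInf {r | riseEnd v T < r ∧ deriv v r = 0}

section Rise

variable {n : ℕ} {f v : ℝ → ℝ} {b β r s R T : ℝ}

lemma rises_of_mem_Ioo (hne : (riseSet v T).Nonempty) (hs : s ∈ Ioo T (riseEnd v T)) :
    v s < 0 ∧ 0 < deriv v s := by
  obtain ⟨r, hr, hsr⟩ := exists_lt_of_lt_csSup hne hs.2
  exact hr.2 s ⟨hs.1, hsr⟩

lemma rises_of_not_bddAbove (hunb : ¬ BddAbove (riseSet v T)) (hs : T < s) :
    v s < 0 ∧ 0 < deriv v s := by
  obtain ⟨r, hr, hsr⟩ := not_bddAbove_iff.1 hunb s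
  exact hr.2 s ⟨hs, hsr⟩

lemma lt_riseEnd (hne : (riseSet v T).Nonempty) (hbdd : BddAbove (riseSet v T)) :
    T < riseEnd v T := by
  obtain ⟨r, hr⟩ := hne
  exact hr.1.trans_le (le_csSup hbdd hr)

lemma riseEnd_nonneg (hT : 0 ≤ T) : 0 ≤ riseEnd v T :=
  Real.sSup_nonneg fun _ hr => hT.trans hr.1.le

lemma nextCritical_nonneg (hT : 0 ≤ T) : 0 ≤ nextCritical v T :=
  Real.sInf_nonneg fun _ hr => (riseEnd_nonneg hT).trans hr.1.le

lemma nextCritical_le (hr : riseEnd v T < r) (hvr : deriv v r = 0) : nextCritical v T ≤ r :=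
  csInf_le ⟨riseEnd v T, fun _ hs => hs.1.le⟩ ⟨hr, hvr⟩

lemma exists_critical_of_lt_nextCritical (hT : 0 ≤ T) (hlt : T < nextCritical v T) :
    {r | riseEnd v T < r ∧ deriv v r = 0}.Nonempty := by
  by_contra! hempty
  rw [nextCritical, hempty, Real.sInf_empty] at hlt
  exact hlt.not_ge hT

lemma bddAbove_riseSet (hT : 0 ≤ T) (hlt : T < nextCritical v T) : BddAbove (riseSet v T) := by
  by_contra hunb
  obtain ⟨r, hZr, hvr⟩ := exists_critical_of_lt_nextCritical hT hlt
  exact (rises_of_not_bddAbove hunb (hlt.trans_le (nextCritical_le hZr hvr))).2.ne' hvr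

lemma riseEnd_le_nextCritical (hT : 0 ≤ T) (hlt : T < nextCritical v T) :
    riseEnd v T ≤ nextCritical v T :=
  le_csInf (exists_critical_of_lt_nextCritical hT hlt) fun _ hr => hr.1.le

namespace RadialSol

lemma riseSet_nonempty (hn : 1 ≤ n) (h1 : Hf1 f b β) (h : RadialSol n f v) (hT : 0 ≤ T)
    (hrest : RestsBelow v β T) : (riseSet v T).Nonempty := by
  have hev : ∀ᶠ r in nhdsWithin T (Ioi T), v r < -β :=
    ((h.continuousOn T hT).mono fun r hr => hT.trans (le_of_lt hr)).eventually_lt_const hrest.2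
  obtain ⟨d, hTd, hd⟩ := mem_nhdsGT_iff_exists_Ioo_subset.1 hev
  refine ⟨d, hTd, fun s hs => ⟨(hd hs).trans (neg_neg_of_pos h1.β_pos), ?_⟩⟩
  exact h.deriv_pos_of_lt_neg hn h1 hT hs.1 hrest.1 fun r hr => hd ⟨hr.1, hr.2.trans hs.2⟩

lemma nonpos_riseEnd (h : RadialSol n f v) (hT : 0 ≤ T) (hne : (riseSet v T).Nonempty)
    (hbdd : BddAbove (riseSet v T)) : v (riseEnd v T) ≤ 0 ∧ 0 ≤ deriv v (riseEnd v T) := by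
  have hTZ := lt_riseEnd hne hbdd
  have hcl : closure (Ioo T (riseEnd v T)) = Icc T (riseEnd v T) := closure_Ioo hTZ.ne
  have hsub : closure (Ioo T (riseEnd v T)) ⊆ Ici 0 := hcl ▸ fun r hr => hT.trans hr.1
  have hZ : riseEnd v T ∈ closure (Ioo T (riseEnd v T)) := hcl ▸ right_mem_Icc.2 hTZ.le
  exact ⟨le_on_closure (fun s hs => (rises_of_mem_Ioo hne hs).1.le) (h.continuousOn.mono hsub)
      continuousOn_const hZ,
    le_on_closure (fun s hs => (rises_of_mem_Ioo hne hs).2.le) continuousOn_const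
      (h.continuousOn_deriv.mono hsub) hZ⟩

lemma deriv_riseEnd_pos (hn : 1 ≤ n) (hf : Continuous f) (h1 : Hf1 f b β) (h : RadialSol n f v)
    (hT : 0 ≤ T) (hrest : RestsBelow v β T) (hbdd : BddAbove (riseSet v T))
    (hE : 0 < energy f v (riseEnd v T)) : 0 < deriv v (riseEnd v T) := by
  have hne := h.riseSet_nonempty hn h1 hT hrest
  have hTZ := lt_riseEnd hne hbdd
  obtain ⟨hvZ, hdZ⟩ := h.nonpos_riseEnd hT hne hbdd
  refine hdZ.lt_of_ne fun h0 => ?_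
  have hlow : v (riseEnd v T) < -β := by
    have := h1.lt_abs_of_energy_pos hf h0.symm hE
    rwa [abs_of_nonpos hvZ, lt_neg] at this
  have hmono := h.strictMonoOn hT fun s hs => (rises_of_mem_Ioo hne hs).2
  refine (h.deriv_pos_of_lt_neg hn h1 hT hTZ hrest.1 fun r hr => ?_).ne h0
  exact (hmono (Ioo_subset_Icc_self hr) (right_mem_Icc.2 hTZ.le) hr.2).trans hlow

lemma map_riseEnd (h : RadialSol n f v) (hT : 0 ≤ T) (hne : (riseSet v T).Nonempty)
    (hbdd : BddAbove (riseSet v T)) (hd : 0 < deriv v (riseEnd v T)) : v (riseEnd v T) = 0 := by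
  have hTZ := lt_riseEnd hne hbdd
  have hZ : 0 < riseEnd v T := hT.trans_lt hTZ
  refine (h.nonpos_riseEnd hT hne hbdd).1.antisymm (not_lt.1 fun hneg => ?_)
  have hev : ∀ᶠ r in nhds (riseEnd v T), v r < 0 ∧ 0 < deriv v r :=
    ((h.differentiableAt _ hZ).continuousAt.eventually_lt_const hneg).and
      ((h.hasDerivAt_deriv _ hZ).continuousAt.eventually_const_lt hd)
  obtain ⟨x, y, ⟨hxZ, hZy⟩, hxy⟩ := mem_nhds_iff_exists_Ioo_subset.1 hev
  refine hZy.not_ge (le_csSup hbdd ⟨hTZ.trans hZy, fun s hs => ?_⟩)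
  rcases lt_or_ge s (riseEnd v T) with hsZ | hZs
  · exact rises_of_mem_Ioo hne ⟨hs.1, hsZ⟩
  · exact hxy ⟨hxZ.trans_le hZs, hs.2⟩

lemma deriv_nextCritical (h : RadialSol n f v) (hT : 0 ≤ T) (hlt : T < nextCritical v T) :
    deriv v (nextCritical v T) = 0 := by
  have hclosed : IsClosed (Ici 0 ∩ deriv v ⁻¹' {0}) :=
    h.continuousOn_deriv.preimage_isClosed_of_isClosed isClosed_Ici isClosed_singleton
  have hsub : {r | riseEnd v T < r ∧ deriv v r = 0} ⊆ Ici 0 ∩ deriv v ⁻¹' {0} :=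
    fun r hr => ⟨(riseEnd_nonneg hT).trans hr.1.le, hr.2⟩
  exact (closure_minimal hsub hclosed (csInf_mem_closure
    (exists_critical_of_lt_nextCritical hT hlt) ⟨riseEnd v T, fun r hr => hr.1.le⟩)).2

lemma deriv_pos_of_lt_nextCritical (h : RadialSol n f v) (hT : 0 ≤ T)
    (hne : (riseSet v T).Nonempty) (hd : 0 < deriv v (riseEnd v T)) :
    ∀ r ∈ Ioo T (nextCritical v T), 0 < deriv v r := by
  intro r hr
  rcases lt_trichotomy r (riseEnd v T) with hrZ | rfl | hZr
  · exact (rises_of_mem_Ioo hne ⟨hr.1, hrZ⟩).2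
  · exact hd
  by_contra! hneg
  obtain ⟨x, hx, hx0⟩ := intermediate_value_Icc' hZr.le
    (h.continuousOn_deriv.mono fun s hs => (riseEnd_nonneg hT).trans hs.1) ⟨hneg, hd.le⟩
  have hZx : riseEnd v T < x := hx.1.lt_of_ne fun he => hd.ne' (he ▸ hx0)
  exact ((nextCritical_le hZx hx0).trans hx.2).not_gt hr.2

lemma rises_to_nextCritical (hn : 1 ≤ n) (hf : Continuous f) (h1 : Hf1 f b β)
    (h : RadialSol n f v) (hT : 0 ≤ T) (hrest : RestsBelow v β T) (hlt : T < nextCritical v T)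
    (hTR : T < R) (hE : 0 < energy f v R) (hR : R < nextCritical v T → β < v R) :
    (∀ r ∈ Ioo T (nextCritical v T), 0 < deriv v r) ∧ RestsBelow (-v) β (nextCritical v T) := by
  have hne := h.riseSet_nonempty hn h1 hT hrest
  have hbdd := bddAbove_riseSet hT hlt
  have hZT' := riseEnd_le_nextCritical hT hlt
  have hZR : riseEnd v T ≤ R := by
    by_contra! hRZ
    exact ((rises_of_mem_Ioo hne ⟨hTR, hRZ⟩).1.trans h1.β_pos).not_gt (hR (hRZ.trans_le hZT'))
  have hanti := h.antitoneOn_energy hn hf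
  have hd := h.deriv_riseEnd_pos hn hf h1 hT hrest hbdd
    (hE.trans_le (hanti (riseEnd_nonneg hT) (hT.trans hTR.le) hZR))
  have hpos := h.deriv_pos_of_lt_nextCritical hT hne hd
  have hmono := h.strictMonoOn hT hpos
  have hT'0 := h.deriv_nextCritical hT hlt
  have hvT' : 0 ≤ v (nextCritical v T) := by
    rw [← h.map_riseEnd hT hne hbdd hd]
    exact hmono.monotoneOn ⟨(lt_riseEnd hne hbdd).le, hZT'⟩ (right_mem_Icc.2 hlt.le) hZT'
  refine ⟨hpos, by simp only [deriv.neg', hT'0, neg_zero], neg_lt_neg ?_⟩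
  rcases le_or_gt (nextCritical v T) R with hT'R | hRT'
  · have hET' := hE.trans_le (hanti (hT.trans hlt.le) (hT.trans hTR.le) hT'R)
    simpa only [abs_of_nonneg hvT'] using h1.lt_abs_of_energy_pos hf hT'0 hET'
  · exact (hR hRT').trans (hmono ⟨hTR.le, hRT'.le⟩ (right_mem_Icc.2 hlt.le) hRT')

lemma tendsto_limUnder_of_not_bddAbove (h : RadialSol n f v) (hT : 0 ≤ T)
    (hunb : ¬ BddAbove (riseSet v T)) : Tendsto v atTop (nhds (limUnder atTop v)) := by
  refine tendsto_nhds_limUnder ?_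
  have hmax : ∀ r, T < max r (T + 1) := fun r => lt_max_of_lt_right (lt_add_one T)
  have hmono : Monotone fun r => v (max r (T + 1)) := fun x y hxy =>
    ((h.strictMonoOn (d := max y (T + 1)) hT fun r hr =>
      (rises_of_not_bddAbove hunb hr.1).2).monotoneOn
        ⟨(hmax x).le, max_le_max_right _ hxy⟩ ⟨(hmax y).le, le_rfl⟩ (max_le_max_right _ hxy))
  have hbdd : BddAbove (range fun r => v (max r (T + 1))) := by
    refine ⟨0, ?_⟩
    rintro _ ⟨r, rfl⟩
    exact (rises_of_not_bddAbove hunb (hmax r)).1.le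
  refine ⟨_, (tendsto_atTop_ciSup hmono hbdd).congr' ?_⟩
  filter_upwards [eventually_ge_atTop (T + 1)] with r hr
  rw [max_eq_left hr]

lemma energy_pos_of_tendsto_zero (hn : 2 ≤ n) (hf : Continuous f) (h : RadialSol n f v)
    (hT : 0 ≤ T) (hunb : ¬ BddAbove (riseSet v T)) (hv : Tendsto v atTop (nhds 0)) :
    0 < energy f v T := by
  refine lt_of_le_of_lt ?_ (h.energy_lt hn hf hT (lt_add_one T) fun r hr =>
    (rises_of_not_bddAbove hunb hr.1).2.ne')
  have hlim : Tendsto (fun r => 2 * Fint f (v r)) atTop (nhds 0) := by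
    simpa [Fint] using (((continuous_Fint hf).tendsto 0).comp hv).const_mul 2
  refine le_of_tendsto hlim ?_
  filter_upwards [eventually_ge_atTop (T + 1)] with r hr
  have hT1 : 0 ≤ T + 1 := by linarith
  refine le_trans ?_ (h.antitoneOn_energy (by omega) hf hT1 (hT1.trans hr) hr)
  exact le_add_of_nonneg_left (sq_nonneg _)

lemma energy_pos_of_rest_at_riseEnd (hn : 2 ≤ n) (hf : Continuous f) (h : RadialSol n f v)
    (hT : 0 ≤ T) (hne : (riseSet v T).Nonempty) (hbdd : BddAbove (riseSet v T))
    (hv : v (riseEnd v T) = 0) (hd : deriv v (riseEnd v T) = 0) : 0 < energy f v T := by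
  have hlt := h.energy_lt hn hf hT (lt_riseEnd hne hbdd) fun s hs =>
    (rises_of_mem_Ioo hne hs).2.ne'
  simpa [energy, hv, hd, Fint] using hlt

end RadialSol

end Rise

/-! ### Critical points for initial values near `α*` -/

section CriticalPoints

variable {n k N j : ℕ} {f : ℝ → ℝ} {u : ℝ → ℝ → ℝ} {b β α α' R : ℝ}

lemma ZsetAux_eq_riseSet (u : ℝ → ℝ → ℝ) (k : ℕ) (T α : ℝ) :
    ZsetAux u k T α = riseSet (fun r => (-1) ^ k * u α r) T := by
  simp only [ZsetAux, riseSet, deriv_const_mul_field]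

lemma Zk_succ_eq_riseEnd (u : ℝ → ℝ → ℝ) (j : ℕ) (α : ℝ) :
    Zk u (j + 1) α = riseEnd (fun r => (-1) ^ (j + 1) * u α r) (Tk u j α) :=
  congrArg sSup (ZsetAux_eq_riseSet u (j + 1) (Tk u j α) α)

lemma Tk_succ_eq_nextCritical (u : ℝ → ℝ → ℝ) (j : ℕ) (α : ℝ) :
    Tk u (j + 1) α = nextCritical (fun r => (-1) ^ (j + 1) * u α r) (Tk u j α) := by
  rw [nextCritical, ← Zk_succ_eq_riseEnd]
  simp only [deriv_const_mul_field, mul_eq_zero, pow_eq_zero_iff', neg_eq_zero, one_ne_zero,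
    false_and, false_or]
  rfl

lemma Tk_nonneg (u : ℝ → ℝ → ℝ) (j : ℕ) (α : ℝ) : 0 ≤ Tk u j α := by
  induction j with
  | zero => exact le_rfl
  | succ j ih => exact Tk_succ_eq_nextCritical u j α ▸ nextCritical_nonneg ih

lemma energy_neg_one_pow_mul (hodd : ∀ s, f (-s) = -f s) (v : ℝ → ℝ) (j : ℕ) :
    energy f (fun r => (-1) ^ j * v r) = energy f v := by
  rcases neg_one_pow_eq_or ℝ j with hj | hj
  · simp only [hj, one_mul]
  · simp only [hj, neg_one_mul]
    exact energy_neg hodd v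

lemma Tk_succ_spec (hn : 1 ≤ n) (hf : Continuous f) (h1 : Hf1 f b β) (h : RadialSol n f (u α))
    (hrest : RestsBelow (fun r => (-1) ^ (j + 1) * u α r) β (Tk u j α))
    (hlt : Tk u j α < Tk u (j + 1) α) (hR : Tk u j α < R) (hE : 0 < energy f (u α) R)
    (hβ : R < Tk u (j + 1) α → β < (-1) ^ (j + 1) * u α R) :
    (∀ r ∈ Ioo (Tk u j α) (Tk u (j + 1) α), 0 < (-1) ^ (j + 1) * deriv (u α) r) ∧
      RestsBelow (fun r => (-1) ^ (j + 2) * u α r) β (Tk u (j + 1) α) := by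
  rw [Tk_succ_eq_nextCritical] at hlt hβ ⊢
  obtain ⟨hpos, hrest'⟩ := (h.neg_one_pow_mul h1.map_neg (j + 1)).rises_to_nextCritical hn hf h1
    (Tk_nonneg u j α) hrest hlt hR (by rwa [energy_neg_one_pow_mul h1.map_neg]) hβ
  refine ⟨by simpa only [deriv_const_mul_field] using hpos, ?_⟩
  convert hrest' using 1
  ext r
  simp only [Pi.neg_apply]
  ring

/-- `OscillatesUpTo u β N α`: up to its `N`-th critical point `T_N`, the solution `u α` is strictly
monotone between consecutive critical points `T_j`, alternating between local maxima above `β`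
(`j` even) and local minima below `-β` (`j` odd). -/
structure OscillatesUpTo (u : ℝ → ℝ → ℝ) (β : ℝ) (N : ℕ) (α : ℝ) : Prop where
  lt_succ : ∀ j < N, Tk u j α < Tk u (j + 1) α
  slope : ∀ j < N, ∀ r ∈ Ioo (Tk u j α) (Tk u (j + 1) α), 0 < (-1) ^ (j + 1) * deriv (u α) r
  rest : ∀ j ≤ N, RestsBelow (fun r => (-1) ^ (j + 1) * u α r) β (Tk u j α)

lemma OscillatesUpTo.deriv_Tk (h : OscillatesUpTo u β N α) (hj : j ≤ N) :
    deriv (u α) (Tk u j α) = 0 := by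
  simpa [RestsBelow, deriv_const_mul_field] using (h.rest j hj).1

lemma OscillatesUpTo.lt_map_Tk (h : OscillatesUpTo u β N α) (hj : j ≤ N) :
    β < (-1) ^ j * u α (Tk u j α) := by
  have := (h.rest j hj).2
  simp only [pow_succ] at this
  linarith

lemma oscillatesUpTo_of_energy_pos (hn : 1 ≤ n) (hf : Continuous f) (h1 : Hf1 f b β)
    (h : RadialSol n f (u α)) (h0 : 0 ≤ u α 0) (hR0 : 0 ≤ R)
    (hlt : ∀ j < N, Tk u j α < Tk u (j + 1) α) (hR : ∀ j < N, Tk u j α < R)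
    (hE : 0 < energy f (u α) R) (hβ : R < Tk u N α → β < (-1) ^ N * u α R) :
    OscillatesUpTo u β N α := by
  have hrest₀ : RestsBelow (fun r => (-1) ^ (0 + 1) * u α r) β (Tk u 0 α) := by
    have hE₀ := hE.trans_le (h.antitoneOn_energy hn hf self_mem_Ici hR0 hR0)
    have := h1.lt_abs_of_energy_pos hf h.deriv_zero hE₀
    rw [abs_of_nonneg h0] at this
    exact ⟨by simp [Tk, ZT, h.deriv_zero], by simpa [Tk, ZT] using this⟩
  have step : ∀ j < N, RestsBelow (fun r => (-1) ^ (j + 1) * u α r) β (Tk u j α) →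
      (∀ r ∈ Ioo (Tk u j α) (Tk u (j + 1) α), 0 < (-1) ^ (j + 1) * deriv (u α) r) ∧
        RestsBelow (fun r => (-1) ^ (j + 2) * u α r) β (Tk u (j + 1) α) := fun j hj hrest => by
    refine Tk_succ_spec hn hf h1 h hrest (hlt j hj) (hR j hj) hE fun hRj => ?_
    rcases (Nat.succ_le_of_lt hj).eq_or_lt with rfl | hj'
    · exact hβ hRj
    · exact absurd hRj (hR (j + 1) hj').not_gt
  have hrest : ∀ j ≤ N, RestsBelow (fun r => (-1) ^ (j + 1) * u α r) β (Tk u j α) := by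
    intro j
    induction j with
    | zero => exact fun _ => hrest₀
    | succ j ih => exact fun hj => (step j hj (ih (by omega))).2
  exact ⟨hlt, fun j hj => (step j hj (hrest j hj.le)).1, hrest⟩

lemma pos_of_mem_Nk {j : ℕ} (h : α ∈ Nk u j) : 0 < α := by
  induction j with
  | zero => exact h
  | succ j ih =>
    cases j with
    | zero => exact h.1
    | succ j => exact ih h.1

lemma pos_and_rest_of_mem_Gk (h : α ∈ Gk u k) : 0 < α ∧ uAtZ u k α = 0 ∧ duAtZ u k α = 0 := by
  match k, h with
  | 1, h => exact h
  | j + 2, h => exact ⟨pos_of_mem_Nk h.1, h.2.2⟩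

lemma energy_pos_of_mem_Gk_succ (hn : 2 ≤ n) (hf : Continuous f) (h1 : Hf1 f b β)
    (hu : Family n f u) (hα : α ∈ Gk u (N + 1)) : 0 < energy f (u α) (Tk u N α) := by
  obtain ⟨hα0, hz, hdz⟩ := pos_and_rest_of_mem_Gk hα
  have hT := Tk_nonneg u N α
  have h := (hu.radialSol hα0).neg_one_pow_mul h1.map_neg (N + 1)
  have hset : ZsetK u (N + 1) α = riseSet (fun r => (-1) ^ (N + 1) * u α r) (Tk u N α) :=
    ZsetAux_eq_riseSet u (N + 1) (Tk u N α) α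
  simp only [uAtZ, duAtZ, Zk_succ_eq_riseEnd] at hz hdz
  rw [← energy_neg_one_pow_mul h1.map_neg _ (N + 1)]
  split_ifs at hz hdz with hbdd <;> rw [hset] at hbdd
  · refine h.energy_pos_of_rest_at_riseEnd hn hf hT ?_ hbdd (by simp only [hz, mul_zero])
      (by simp only [deriv_const_mul_field, hdz, mul_zero])
    by_contra! hempty
    rw [riseEnd, hempty, Real.sSup_empty, (hu.1 α hα0).1] at hz
    exact hα0.ne' hz
  · refine h.energy_pos_of_tendsto_zero hn hf hT hbdd ?_
    have hlim := h.tendsto_limUnder_of_not_bddAbove hT hbdd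
    have hlim' := hlim.const_mul ((-1) ^ (N + 1))
    simp only [← mul_assoc, ← mul_pow, mul_neg_one, neg_neg, one_pow, one_mul] at hlim'
    rw [← hlim'.limUnder_eq] at hlim'
    simpa [hz] using hlim'.const_mul ((-1) ^ (N + 1))

/-- `Interlaced u N I`: any two solutions with initial values in `I` (possibly equal) meet at a
radius which, for both of them, lies between the critical points `T_j` and `T_{j+1}`, `j < N`. -/
def Interlaced (u : ℝ → ℝ → ℝ) (N : ℕ) (I : Set ℝ) : Prop :=
  ∀ α ∈ I, ∀ α' ∈ I, ∀ j < N, ∃ t ∈ Ioo (Tk u j α) (Tk u (j + 1) α),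
    t ∈ Ioo (Tk u j α') (Tk u (j + 1) α') ∧ u α t = u α' t

lemma DeltaOneLemma.interlaced {αs a δ₁ : ℝ} (hD : DeltaOneLemma f β u k αs a δ₁) :
    Interlaced u (k - 1) (Ioo (αs - δ₁) (αs + δ₁)) := by
  have key : ∀ x ∈ Ioo (αs - δ₁) (αs + δ₁), ∀ y ∈ Ioo (αs - δ₁) (αs + δ₁), x < y →
      ∀ j < k - 1, ∃ t ∈ Ioo (Tk u j x) (Tk u (j + 1) x),
        t ∈ Ioo (Tk u j y) (Tk u (j + 1) y) ∧ u x t = u y t := by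
    intro x hx y hy hxy j hj
    obtain ⟨t, hmax, hmin, htu⟩ := (hD.2.2.2 x hx y hy hxy).1 (j + 1) (by omega) hj
    rw [Nat.add_sub_cancel, max_lt_iff] at hmax
    rw [lt_min_iff] at hmin
    exact ⟨t, ⟨hmax.1, hmin.1⟩, ⟨hmax.2, hmin.2⟩, htu⟩
  intro α hα α' hα' j hj
  rcases lt_trichotomy α α' with hlt | rfl | hlt
  · exact key α hα α' hα' hlt j hj
  · obtain ⟨y, hy, hyδ⟩ := exists_between hα.2
    obtain ⟨t, ht, -⟩ := key α hα y ⟨hα.1.trans hy, hyδ⟩ hy j hj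
    exact ⟨t, ht, ht, rfl⟩
  · obtain ⟨t, ht', ht, htu⟩ := key α' hα' α hα hlt j hj
    exact ⟨t, ht, ht', htu.symm⟩

lemma Interlaced.lt {I : Set ℝ} (hI : Interlaced u N I) (hα : α ∈ I) (hα' : α' ∈ I) (hj : j < N) :
    Tk u j α < Tk u (j + 1) α' := by
  obtain ⟨t, ht, ht', -⟩ := hI α hα α' hα' j hj
  exact ht.1.trans ht'.2

lemma Interlaced.lt_last {I : Set ℝ} (hI : Interlaced u N I) (hα : α ∈ I) (hα' : α' ∈ I)
    (hj : j < N) : Tk u j α < Tk u N α' := by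
  refine (hI.lt hα hα' hj).trans_le (?_ : Tk u (j + 1) α' ≤ Tk u N α')
  refine Nat.decreasingInduction' (P := fun m => Tk u m α' ≤ Tk u N α') ?_ (Nat.succ_le_of_lt hj)
    le_rfl
  exact fun m hm _ ih => (hI.lt hα' hα' hm).le.trans ih

lemma Interlaced.oscillatesUpTo {I : Set ℝ} {αs : ℝ} (hn : 1 ≤ n) (hf : Continuous f)
    (h1 : Hf1 f b β) (hu : Family n f u) (hI : Interlaced u N I) (hαs : αs ∈ I) (hα : α ∈ I)
    (hα0 : 0 < α) (hE : 0 < energy f (u α) (Tk u N αs))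
    (hβ : Tk u N αs < Tk u N α → β < (-1) ^ N * u α (Tk u N αs)) : OscillatesUpTo u β N α :=
  oscillatesUpTo_of_energy_pos hn hf h1 (hu.radialSol hα0) ((hu.1 α hα0).1.symm ▸ hα0.le)
    (Tk_nonneg u N αs) (fun _ => hI.lt hα hα) (fun _ => hI.lt_last hα hαs) hE hβ

lemma Interlaced.lt_map_last {I : Set ℝ} {αs : ℝ} (hn : 2 ≤ n) (hf : Continuous f)
    (h1 : Hf1 f b β) (hu : Family n f u) (hI : Interlaced u N I) (hαs : αs ∈ I)
    (hG : αs ∈ Gk u (N + 1)) : β < (-1) ^ N * u αs (Tk u N αs) :=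
  (hI.oscillatesUpTo (by omega) hf h1 hu hαs hαs (pos_and_rest_of_mem_Gk hG).1
    (energy_pos_of_mem_Gk_succ hn hf h1 hu hG) fun h => absurd h (lt_irrefl _)).lt_map_Tk le_rfl

lemma Interlaced.eventually_oscillatesUpTo {I : Set ℝ} {αs : ℝ} (hn : 2 ≤ n) (hf : Continuous f)
    (h1 : Hf1 f b β) (hu : Family n f u) (hI : Interlaced u N I) (hIαs : I ∈ nhds αs)
    (hG : αs ∈ Gk u (N + 1)) : ∀ᶠ α in nhds αs, 0 < α ∧ α ∈ I ∧ OscillatesUpTo u β N α := by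
  have hα0 := (pos_and_rest_of_mem_Gk hG).1
  have hαs := mem_of_mem_nhds hIαs
  have hcont : ContinuousAt (fun α => (-1) ^ N * u α (Tk u N αs)) αs := by
    refine continuousAt_const.mul (ContinuousOn.continuousAt (s := Ioi 0) ?_ (Ioi_mem_nhds hα0))
    exact hu.2.1.comp (f := fun α : ℝ => (α, Tk u N αs)) (by fun_prop)
      fun α hα => ⟨hα, Tk_nonneg u N αs⟩
  filter_upwards [lt_mem_nhds hα0, hIαs,
    hcont.eventually_const_lt (hI.lt_map_last hn hf h1 hu hαs hG)] with α hα hαI hβ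
  refine ⟨hα, hαI, hI.oscillatesUpTo (by omega) hf h1 hu hαs hαI hα ?_ fun _ => hβ⟩
  refine h1.energy_pos hf (hβ.trans_le ((le_abs_self _).trans ?_))
  rw [abs_mul, abs_neg_one_pow, one_mul]

end CriticalPoints

/-! ### From maximum to minimum -/

section InverseBranch

variable {v ρ : ℝ → ℝ} {L R t : ℝ}

lemma InvBranch.apply (hρ : InvBranch v ρ L R (v R) (v L)) (hv : StrictAntiOn v (Icc L R))
    (ht : t ∈ Icc L R) : ρ (v t) = t := by
  have hLR := ht.1.trans ht.2
  have hvt : v t ∈ Icc (v R) (v L) :=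
    ⟨hv.antitoneOn ht (right_mem_Icc.2 hLR) ht.2, hv.antitoneOn (left_mem_Icc.2 hLR) ht ht.1⟩
  exact hv.injOn (hρ.1 _ hvt).1 ht (hρ.1 _ hvt).2

lemma InvBranch.continuousOn (hρ : InvBranch v ρ L R (v R) (v L)) (hv : StrictAntiOn v (Icc L R))
    (hc : ContinuousOn v (Icc L R)) : ContinuousOn ρ (Icc (v R) (v L)) := by
  refine continuousOn_iff_isClosed.2 fun C hC => ⟨v '' (C ∩ Icc L R), ?_, ?_⟩
  · exact ((isCompact_Icc.inter_left hC).image_of_continuousOn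
      (hc.mono inter_subset_right)).isClosed
  · ext s
    refine and_congr_left fun hs => ⟨fun h => ⟨ρ s, ⟨h, (hρ.1 s hs).1⟩, (hρ.1 s hs).2⟩, ?_⟩
    rintro ⟨t, ⟨htC, ht⟩, rfl⟩
    rwa [mem_preimage, hρ.apply hv ht]

end InverseBranch

/-- At a critical value the inverse is not differentiable, so that `Qfun` takes `1 / deriv ρ s` to
be `0` there, which is the value of the slope. -/
lemma Qfun_eq_phaseQ {f H v ρ : ℝ → ℝ} {m M s : ℝ} (hmM : m < M) (hs : s ∈ Icc m M)
    (hv : ∀ r, 0 < r → DifferentiableAt ℝ v r) (hinv : ∀ x ∈ Icc m M, v (ρ x) = x)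
    (hρ : 0 ≤ ρ s) (h0 : deriv v (ρ s) = 0) :
    Qfun f H ρ s = phaseQ f H ρ (fun x => deriv v (ρ x)) s := by
  have hcrit : ρ s = 0 ∨ deriv ρ s = 0 := by
    by_contra! hcon
    have hd := (hv (ρ s) (hρ.lt_of_ne' hcon.1)).hasDerivAt.comp s
      (differentiableAt_of_deriv_ne_zero hcon.2).hasDerivAt
    have hid : HasDerivWithinAt (v ∘ ρ) 1 (Icc m M) s :=
      (hasDerivWithinAt_id s (Icc m M)).congr hinv (hinv s hs)
    have := (uniqueDiffOn_Icc hmM s hs).eq_deriv _ hd.hasDerivWithinAt hid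
    rw [h0, zero_mul] at this
    exact zero_ne_one this
  rcases hcrit with h | h <;> simp [Qfun, phaseQ, h0, h]

/-- `v` decreases from a critical point `L`, where it exceeds `β`, to the next critical point `R`,
where it is below `-β`. -/
structure Descent (v : ℝ → ℝ) (β L R : ℝ) : Prop where
  nonneg : 0 ≤ L
  lt : L < R
  deriv_left : deriv v L = 0
  deriv_right : deriv v R = 0
  lt_map_left : β < v L
  map_right_lt : v R < -β
  deriv_neg : ∀ r ∈ Ioo L R, deriv v r < 0

lemma OscillatesUpTo.descent {u : ℝ → ℝ → ℝ} {β α : ℝ} {N j : ℕ} (h : OscillatesUpTo u β N α)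
    (hj : 2 * j + 1 ≤ N) : Descent (u α) β (Tk u (2 * j) α) (Tk u (2 * j + 1) α) where
  nonneg := Tk_nonneg u _ α
  lt := h.lt_succ _ hj
  deriv_left := h.deriv_Tk (by omega)
  deriv_right := h.deriv_Tk hj
  lt_map_left := by simpa [pow_mul] using h.lt_map_Tk (j := 2 * j) (by omega)
  map_right_lt := lt_neg.1 (by simpa [pow_succ, pow_mul] using h.lt_map_Tk hj)
  deriv_neg r hr := by simpa [pow_succ, pow_mul] using h.slope (2 * j) hj r hr

namespace Descent

variable {n : ℕ} {f v ρ H : ℝ → ℝ} {b β L R s t : ℝ}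

lemma deriv_nonpos (D : Descent v β L R) (hρ : InvBranch v ρ L R (v R) (v L))
    (hs : s ∈ Icc (v R) (v L)) : deriv v (ρ s) ≤ 0 := by
  obtain ⟨⟨hL, hR⟩, -⟩ := hρ.1 s hs
  rcases hL.eq_or_lt with hL | hL
  · rw [← hL, D.deriv_left]
  rcases hR.eq_or_lt with hR | hR
  · rw [hR, D.deriv_right]
  · exact (D.deriv_neg _ ⟨hL, hR⟩).le

lemma decreasingBranch (D : Descent v β L R) (h : RadialSol n f v)
    (hρ : InvBranch v ρ L R (v R) (v L)) :
    DecreasingBranch n f ρ (fun s => deriv v (ρ s)) (v R) (v L) := by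
  have hsub : Icc L R ⊆ Ici 0 := fun r hr => D.nonneg.trans hr.1
  have hcont := hρ.continuousOn (h.strictAntiOn D.nonneg D.deriv_neg) (h.continuousOn.mono hsub)
  have hL : ∀ s ∈ Ico (v R) (v L), L < ρ s := fun s hs => by
    obtain ⟨hmem, hvs⟩ := hρ.1 s (Ico_subset_Icc_self hs)
    exact hmem.1.lt_of_ne fun he => hs.2.ne' (he ▸ hvs)
  have hmem : ∀ s ∈ Ioo (v R) (v L), ρ s ∈ Ioo L R := fun s hs => by
    obtain ⟨hmem, hvs⟩ := hρ.1 s (Ioo_subset_Icc_self hs)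
    exact ⟨hL s (Ioo_subset_Ico_self hs), hmem.2.lt_of_ne fun he => hs.1.ne (he ▸ hvs)⟩
  refine ⟨hcont, (h.continuousOn_deriv.mono hsub).comp hcont fun s hs => (hρ.1 s hs).1,
    fun s hs => hsub (hρ.1 s hs).1, fun s hs => D.deriv_nonpos hρ hs,
    fun s hs => D.nonneg.trans_lt (hL s hs), fun s hs => D.deriv_neg _ (hmem s hs), hρ.2,
    fun s hs => ?_⟩
  have hne := (D.deriv_neg _ (hmem s hs)).ne
  have hρs : 0 < ρ s := D.nonneg.trans_lt (hmem s hs).1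
  refine ((h.hasDerivAt_deriv _ hρs).comp s (hρ.2 s hs)).congr_deriv ?_
  rw [(hρ.1 s (Ioo_subset_Icc_self hs)).2]
  field_simp

lemma Qfun_map (D : Descent v β L R) (h : RadialSol n f v) (hρ : InvBranch v ρ L R (v R) (v L))
    (ht : t ∈ Icc L R) (hvt : deriv v t = 0) :
    Qfun f H ρ (v t) = phaseQ f H ρ (fun s => deriv v (ρ s)) (v t) := by
  have hanti := h.strictAntiOn D.nonneg D.deriv_neg
  have hLR := D.lt.le
  have hρt := hρ.apply hanti ht
  exact Qfun_eq_phaseQ (hanti ⟨le_rfl, hLR⟩ ⟨hLR, le_rfl⟩ D.lt)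
    ⟨hanti.antitoneOn ht ⟨hLR, le_rfl⟩ ht.2, hanti.antitoneOn ⟨le_rfl, hLR⟩ ht ht.1⟩
    h.differentiableAt (fun x hx => (hρ.1 x hx).2) (hρt.symm ▸ D.nonneg.trans ht.1)
    (hρt.symm ▸ hvt)

theorem min_and_Qfun_lt {v₁ v₂ ρ₁ ρ₂ : ℝ → ℝ} {L₁ R₁ L₂ R₂ : ℝ} (hn : 1 ≤ n) (hf : Continuous f)
    (h1 : Hf1 f b β) (hS : QRegularOn n f H (Ici β)) (hS' : QRegularOn n f H (Iic (-β)))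
    (h₁ : RadialSol n f v₁) (h₂ : RadialSol n f v₂) (D₁ : Descent v₁ β L₁ R₁)
    (D₂ : Descent v₂ β L₂ R₂) (ht₁ : t ∈ Ioo L₁ R₁) (ht₂ : t ∈ Ioo L₂ R₂) (ht : v₁ t = v₂ t)
    (hρ₁ : InvBranch v₁ ρ₁ L₁ R₁ (v₁ R₁) (v₁ L₁)) (hρ₂ : InvBranch v₂ ρ₂ L₂ R₂ (v₂ R₂) (v₂ L₂))
    (hM : v₁ L₁ < v₂ L₂) (hQ : Qfun f H ρ₂ (v₂ L₂) < Qfun f H ρ₁ (v₁ L₁)) :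
    v₂ R₂ < v₁ R₁ ∧ Qfun f H ρ₂ (v₂ R₂) < Qfun f H ρ₁ (v₁ R₁) := by
  have hanti₁ := h₁.strictAntiOn D₁.nonneg D₁.deriv_neg
  have hanti₂ := h₂.strictAntiOn D₂.nonneg D₂.deriv_neg
  have hL₁ := left_mem_Icc.2 D₁.lt.le
  have hL₂ := left_mem_Icc.2 D₂.lt.le
  have hR₁ := right_mem_Icc.2 D₁.lt.le
  have hR₂ := right_mem_Icc.2 D₂.lt.le
  have htI₁ := Ioo_subset_Icc_self ht₁
  have htI₂ := Ioo_subset_Icc_self ht₂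
  rw [D₁.Qfun_map h₁ hρ₁ hL₁ D₁.deriv_left, D₂.Qfun_map h₂ hρ₂ hL₂ D₂.deriv_left] at hQ
  rw [D₁.Qfun_map h₁ hρ₁ hR₁ D₁.deriv_right, D₂.Qfun_map h₂ hρ₂ hR₂ D₂.deriv_right]
  refine (D₁.decreasingBranch h₁ hρ₁).min_and_phaseQ_lt hn hf h1 hS hS' D₁.map_right_lt
    D₂.map_right_lt D₁.lt_map_left hM (D₂.decreasingBranch h₂ hρ₂) ?_ ?_ hQ (c := v₁ t)
    ⟨hanti₁ htI₁ hR₁ ht₁.2, hanti₁ hL₁ htI₁ ht₁.1⟩ ?_ ?_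
  · rw [hρ₁.apply hanti₁ hL₁, D₁.deriv_left]
  · rw [hρ₂.apply hanti₂ hR₂, D₂.deriv_right]
  · exact ht ▸ ⟨hanti₂ htI₂ hR₂ ht₂.2, hanti₂ hL₂ htI₂ ht₂.1⟩
  · rw [hρ₁.apply hanti₁ htI₁, ht, hρ₂.apply hanti₂ htI₂]

end Descent

end Paper

theorem Q_max_min_comparison_general {n k : ℕ} {f H : ℝ → ℝ} {u : ℝ → ℝ → ℝ} {b β αs δ₁ : ℝ}
    (hn : 2 ≤ n) (hf : Continuous f) (h1 : Hf1 f b β)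
    (hfd : ∀ s, β < s → DifferentiableAt ℝ f s) (h4 : Hf4' n f β) (hu : Family n f u)
    (hαs : αs ∈ Gk u k) (hδ₁ : 0 < δ₁) (hI : Interlaced u (k - 1) (Ioo (αs - δ₁) (αs + δ₁)))
    (hH : ∀ s : ℝ, f s ≠ 0 → HasDerivAt H (-4 * ((n : ℝ) - 2) * (Fint f s / f s)) s) :
    ∃ δ, 0 < δ ∧ δ < δ₁ ∧ ∀ α₁ ∈ Ioo (αs - δ) (αs + δ), ∀ α₂ ∈ Ioo (αs - δ) (αs + δ),
      ∀ i, 1 ≤ i → 2 * i ≤ k → ∀ ρ₁ ρ₂ : ℝ → ℝ,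
        InvBranch (u α₁) ρ₁ (Tk u (2 * i - 2) α₁) (Tk u (2 * i - 1) α₁)
          (u α₁ (Tk u (2 * i - 1) α₁)) (u α₁ (Tk u (2 * i - 2) α₁)) →
        InvBranch (u α₂) ρ₂ (Tk u (2 * i - 2) α₂) (Tk u (2 * i - 1) α₂)
          (u α₂ (Tk u (2 * i - 1) α₂)) (u α₂ (Tk u (2 * i - 2) α₂)) →
        u α₁ (Tk u (2 * i - 2) α₁) < u α₂ (Tk u (2 * i - 2) α₂) →
        Qfun f H ρ₂ (u α₂ (Tk u (2 * i - 2) α₂)) < Qfun f H ρ₁ (u α₁ (Tk u (2 * i - 2) α₁)) →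
        u α₂ (Tk u (2 * i - 1) α₂) < u α₁ (Tk u (2 * i - 1) α₁) ∧
          Qfun f H ρ₂ (u α₂ (Tk u (2 * i - 1) α₂)) <
            Qfun f H ρ₁ (u α₁ (Tk u (2 * i - 1) α₁)) := by
  obtain _ | N := k
  · exact hαs.elim
  obtain ⟨ε, hε, hosc⟩ := (nhds_basis_Ioo_pos αs).eventually_iff.1 <|
    hI.eventually_oscillatesUpTo hn hf h1 hu
      (Ioo_mem_nhds (sub_lt_self αs hδ₁) (lt_add_of_pos_right αs hδ₁)) hαs
  obtain ⟨δ, hδ, hδlt⟩ := exists_between (lt_min hε hδ₁)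
  have hδε := (hδlt.trans_le (min_le_left _ _)).le
  have hsub := Ioo_subset_Ioo (sub_le_sub_left hδε αs) (add_le_add_right hδε αs)
  refine ⟨δ, hδ, hδlt.trans_le (min_le_right _ _), fun α₁ hα₁ α₂ hα₂ i hi hik => ?_⟩
  obtain ⟨j, rfl⟩ := Nat.exists_eq_add_of_le' hi
  have hj : 2 * j + 1 ≤ N := by omega
  obtain ⟨hα₁0, hα₁I, hosc₁⟩ := hosc (hsub hα₁)
  obtain ⟨hα₂0, hα₂I, hosc₂⟩ := hosc (hsub hα₂)
  obtain ⟨t, ht₁, ht₂, ht⟩ := hI α₁ hα₁I α₂ hα₂I (2 * j) hj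
  exact fun ρ₁ ρ₂ => (hosc₁.descent hj).min_and_Qfun_lt (by omega) hf h1
    (h1.qRegularOn_Ici hf h4 hfd hH) (h1.qRegularOn_Iic hf h4 hfd hH) (hu.radialSol hα₁0)
    (hu.radialSol hα₂0) (hosc₂.descent hj) ht₁ ht₂ ht

/-- **Proposition 4.2.** Under (f1), (f2), (f4'): comparison of the `Q` functional at the
`i`-th consecutive local maximum and minimum values. The `i`-th maximum (resp. minimum)
point of `u_j` is `T_{2i-2}(α_j)` (resp. `T_{2i-1}(α_j)`), and `ρ_j` is the inverse of
`u_j` on the decreasing branch joining them; `H' = -4(n-2) F/f`. -/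
theorem Q_max_min_comparison
    (n : ℕ) (hn : 2 ≤ n)
    (f : ℝ → ℝ) (b β : ℝ) (hf : Continuous f)
    (h1 : Hf1 f b β) (h2 : Hf2 f) (h4 : Hf4' n f β)
    (u : ℝ → ℝ → ℝ) (hu : Family n f u)
    (k : ℕ) (hk : 1 ≤ k) (αs : ℝ) (hαs : αs ∈ Gk u k)
    (a δ₁ : ℝ) (hδ₁ : DeltaOneLemma f β u k αs a δ₁)
    (i : ℕ) (hi : 1 ≤ i) (hik : 2 * i ≤ k)
    (H : ℝ → ℝ)
    (hH : ∀ s : ℝ, f s ≠ 0 → HasDerivAt H (-4 * ((n : ℝ) - 2) * (Fint f s / f s)) s) :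
    ∃ δ : ℝ, 0 < δ ∧ δ < δ₁ ∧
      ∀ α₁ ∈ Ioo (αs - δ) (αs + δ), ∀ α₂ ∈ Ioo (αs - δ) (αs + δ), α₁ < α₂ →
        ∀ ρ₁ ρ₂ : ℝ → ℝ,
          InvBranch (u α₁) ρ₁ (Tk u (2 * i - 2) α₁) (Tk u (2 * i - 1) α₁)
            (u α₁ (Tk u (2 * i - 1) α₁)) (u α₁ (Tk u (2 * i - 2) α₁)) →
          InvBranch (u α₂) ρ₂ (Tk u (2 * i - 2) α₂) (Tk u (2 * i - 1) α₂)
            (u α₂ (Tk u (2 * i - 1) α₂)) (u α₂ (Tk u (2 * i - 2) α₂)) →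
          u α₁ (Tk u (2 * i - 2) α₁) < u α₂ (Tk u (2 * i - 2) α₂) →
          Qfun f H ρ₂ (u α₂ (Tk u (2 * i - 2) α₂)) <
            Qfun f H ρ₁ (u α₁ (Tk u (2 * i - 2) α₁)) →
          u α₂ (Tk u (2 * i - 1) α₂) < u α₁ (Tk u (2 * i - 1) α₁) ∧
            Qfun f H ρ₂ (u α₂ (Tk u (2 * i - 1) α₂)) <
              Qfun f H ρ₁ (u α₁ (Tk u (2 * i - 1) α₁)) := by
  obtain ⟨δ, hδ, hlt, h⟩ := Q_max_min_comparison_general hn hf h1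
    (fun s hs => h2.2.1 s (h1.β_pos.trans hs)) h4 hu hαs hδ₁.2.1 hδ₁.interlaced hH
  exact ⟨δ, hδ, hlt, fun α₁ h₁ α₂ h₂ _ => h α₁ h₁ α₂ h₂ i hi hik⟩
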